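/- arXiv:2210.00235 — 4 statements merged into one kernel-verified Lean document; each statement's English description precedes it below -/
import Mathlib

section
/- Let n ≥ 1 and let A be a two-way deterministic finite automaton with n states that accepts at least one string. Then the length of the shortest string accepted by A is at most C(2n, n) − 1, where C denotes the binomial coefficient. -/
/-- Tape symbols of a 2DFA: the left end-marker `⊢`, the right end-marker `⊣`,
and the letters of the input alphabet `α`. -/
inductive TapeSymbol (α : Type) where
  | lend
  | rend
  | letter (a : α)

/-- A two-way deterministic finite automaton with input alphabet `α` and state set `σ`:
an initial state, a partial transition function (`none` = undefined; the Boolean direction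
`true` means "move right" (+1), `false` means "move left" (−1)), and a set of accepting
states. -/
structure TwoDFA (α : Type) (σ : Type) where
  init : σ
  δ : σ → TapeSymbol α → Option (σ × Bool)
  F : Set σ

/-- The symbol written on the tape `⊢ a₁ … a_m ⊣` at position `i ∈ {0, …, m+1}`
(for an input string `w = a₁ … a_m`); `none` if the position is off the tape. -/
def tapeSym {α : Type} (w : List α) (i : ℤ) : Option (TapeSymbol α) :=
  if i = 0 then some TapeSymbol.lend
  else if i = (w.length : ℤ) + 1 then some TapeSymbol.rend
  else if 0 < i then (w[(i - 1).toNat]?).map TapeSymbol.letter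
  else none

/-- One step of the 2DFA `A` on input `w`: from configuration `c = (state, position)`
to configuration `c'`. -/
def TwoDFA.Step {α σ : Type} (A : TwoDFA α σ) (w : List α) (c c' : σ × ℤ) : Prop :=
  ∃ s, tapeSym w c.2 = some s ∧
    ∃ r d, A.δ c.1 s = some (r, d) ∧ c' = (r, c.2 + if d then 1 else -1)

/-- The automaton `A` accepts `w` if, starting on the left end-marker (position 0)
in the initial state, its computation eventually reaches the right end-marker
(position `|w| + 1`) in an accepting state. -/
def TwoDFA.Accepts {α σ : Type} (A : TwoDFA α σ) (w : List α) : Prop :=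
  ∃ q ∈ A.F, Relation.ReflTransGen (A.Step w) (A.init, 0) (q, (w.length : ℤ) + 1)

/-!
A loop-free accepting run crosses the boundary between tape cells `i` and `i + 1` rightwards once
more often than leftwards, and each time it arrives in a different state. So the sets `R`, `L` of
states in which it arrives from the left and from the right satisfy `|R| = |L| + 1`, and there are
at most `C(2n, n + 1)` such pairs. If two boundaries carry the same pair, cut out the part of the
input between them and glue the two remaining pieces of the run together: every configuration still
has at most one predecessor, the initial one has none, and none but the final one is a dead end.
Walking along such a structure from the initial configuration can only stop at the final one, so
the shorter input is accepted too.
-/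

open Relation

section Thread

variable {C : Type*} {r E : C → C → Prop} {a b : C}

/-- A finite relation in which every point has at most one predecessor, `a` has none, and every
point that is `a` or has a predecessor, except `b`, has a successor. It stands for the set of
edges of a simple path from `a` to `b`, but may also contain cycles disjoint from that path, which
cutting and regluing a path can produce. -/
structure IsThread (E : C → C → Prop) (a b : C) : Prop where
  finite : {x | ∃ y, E x y}.Finite
  leftUnique : Relator.LeftUnique E
  not_pred_start : ∀ x, ¬ E x a
  exists_succ : ∀ x, (x = a ∨ ∃ z, E z x) → x ≠ b → ∃ y, E x y

theorem IsThread.reflTransGen (hE : IsThread E a b) : ReflTransGen E a b := by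
  by_contra hab
  have exists_succ (x : {x // ReflTransGen E a x}) : ∃ y, E x y :=
    hE.exists_succ x (x.2.cases_tail.imp_right fun ⟨z, _, hz⟩ => ⟨z, hz⟩) fun h => hab (h ▸ x.2)
  have : Finite {x // ReflTransGen E a x} :=
    hE.finite.subset fun x hx => exists_succ ⟨x, hx⟩
  choose f hf using exists_succ
  let next (x : {x // ReflTransGen E a x}) : {x // ReflTransGen E a x} := ⟨f x, x.2.tail (hf x)⟩
  have edge_next (x : {x // ReflTransGen E a x}) : E x (next x) := hf x
  have next_injective : next.Injective := fun x y hxy =>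
    Subtype.ext (hE.leftUnique (edge_next x) (hxy ▸ edge_next y))
  obtain ⟨x, hx⟩ := Finite.surjective_of_injective next_injective ⟨a, .refl⟩
  exact hE.not_pred_start x (by simpa only [hx] using edge_next x)

theorem exists_injOn_path_of_reflTransGen (h : ReflTransGen r a b) :
    ∃ (N : ℕ) (c : ℕ → C), c 0 = a ∧ c N = b ∧ (∀ k < N, r (c k) (c (k + 1))) ∧
      Set.InjOn c (Set.Iic N) := by
  induction h with
  | refl => exact ⟨0, fun _ => a, rfl, rfl, by simp, by simp [Set.InjOn]⟩
  | @tail x y _ hxy ih =>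
    obtain ⟨N, c, rfl, rfl, hstep, hinj⟩ := ih
    by_cases hy : ∃ k ≤ N, c k = y
    · obtain ⟨k, hk, rfl⟩ := hy
      exact ⟨k, c, rfl, rfl, fun l hl => hstep l (by lia), hinj.mono (Set.Iic_subset_Iic.2 hk)⟩
    · have old {k : ℕ} (hk : k ≤ N) : Function.update c (N + 1) y k = c k :=
        Function.update_of_ne (by lia) _ _
      refine ⟨N + 1, Function.update c (N + 1) y, old N.zero_le, Function.update_self .., ?_, ?_⟩
      · intro k hk
        rcases Nat.lt_succ_iff_lt_or_eq.1 hk with hk | rfl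
        · rw [old hk.le, old hk]
          exact hstep k hk
        · rwa [old le_rfl, Function.update_self]
      · rw [← Order.succ_eq_add_one, Order.Iic_succ, Order.succ_eq_add_one,
          Set.injOn_insert (by simp)]
        refine ⟨hinj.congr fun k hk => (old hk).symm, ?_⟩
        rintro ⟨k, hk, hky⟩
        exact hy ⟨k, hk, by rwa [old hk, Function.update_self] at hky⟩

/-- The edges `c 0 → c 1 → ⋯ → c N` of a path, as a relation. -/
def pathEdges (c : ℕ → C) (N : ℕ) (x y : C) : Prop :=
  ∃ k < N, c k = x ∧ c (k + 1) = y

theorem isThread_pathEdges {c : ℕ → C} {N : ℕ} (hinj : Set.InjOn c (Set.Iic N)) :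
    IsThread (pathEdges c N) (c 0) (c N) where
  finite := ((Set.finite_Iio N).image c).subset fun _ ⟨_, k, hk, hx, _⟩ => ⟨k, hk, hx⟩
  leftUnique := by
    rintro _ _ _ ⟨k, hk, rfl, rfl⟩ ⟨l, hl, rfl, hlk⟩
    rw [Nat.succ_injective (hinj hl hk hlk)]
  not_pred_start := by
    rintro _ ⟨k, hk, -, h0⟩
    exact k.succ_ne_zero (hinj hk N.zero_le h0)
  exists_succ := by
    have succ {k : ℕ} (hk : k ≤ N) (hne : c k ≠ c N) : ∃ y, pathEdges c N (c k) y :=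
      ⟨c (k + 1), k, hk.lt_of_ne fun h => hne (h ▸ rfl), rfl, rfl⟩
    rintro _ (rfl | ⟨_, k, hk, rfl, rfl⟩) hne
    exacts [succ N.zero_le hne, succ hk hne]

end Thread

section Crossing

variable {σ : Type*} {E : σ × ℤ → σ × ℤ → Prop}

/-- Every move changes the position, the second component, by exactly one. -/
def MovesByOne (E : σ × ℤ → σ × ℤ → Prop) : Prop :=
  ∀ x y, E x y → y.2 = x.2 + 1 ∨ x.2 = y.2 + 1

/-- The states in which `E` arrives at position `p'` by a move from position `p`. -/
def arrivals (E : σ × ℤ → σ × ℤ → Prop) (p p' : ℤ) : Set σ :=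
  {r | ∃ q, E (q, p) (r, p')}

/-- `E` crosses the boundary between `i` and `i + 1` and the one between `j` and `j + 1` in the
same states, in each of the two directions. -/
def SameCrossings (E : σ × ℤ → σ × ℤ → Prop) (i j : ℤ) : Prop :=
  arrivals E i (i + 1) = arrivals E j (j + 1) ∧ arrivals E (i + 1) i = arrivals E (j + 1) j

theorem SameCrossings.symm {i j : ℤ} (h : SameCrossings E i j) : SameCrossings E j i :=
  ⟨h.1.symm, h.2.symm⟩

theorem count_upcrossing_add {h : ℕ → ℤ} {N : ℕ}
    (hmove : ∀ k < N, h (k + 1) = h k + 1 ∨ h k = h (k + 1) + 1) (i : ℤ) :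
    Nat.count (fun k => h k = i ∧ h (k + 1) = i + 1) N + (if i < h 0 then 1 else 0) =
      Nat.count (fun k => h k = i + 1 ∧ h (k + 1) = i) N + (if i < h N then 1 else 0) := by
  induction N with
  | zero => simp
  | succ N ih =>
    have ih := ih fun k hk => hmove k (by lia)
    have hN := hmove N (by lia)
    rw [Nat.count_succ, Nat.count_succ]
    split_ifs at * <;> lia

theorem ncard_arrivals_pathEdges {c : ℕ → σ × ℤ} {N : ℕ} (hinj : Set.InjOn c (Set.Iic N))
    (p p' : ℤ) :
    (arrivals (pathEdges c N) p p').ncard =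
      Nat.count (fun k => (c k).2 = p ∧ (c (k + 1)).2 = p') N := by
  have arrivals_eq : arrivals (pathEdges c N) p p' = (fun k => (c (k + 1)).1) ''
      ((Finset.range N).filter fun k => (c k).2 = p ∧ (c (k + 1)).2 = p' : Finset ℕ) := by
    ext r
    simp only [arrivals, pathEdges, Set.mem_ofPred_eq, Set.mem_image, Finset.coe_filter,
      Finset.mem_range]
    constructor
    · rintro ⟨q, k, hk, hq, hr⟩
      exact ⟨k, ⟨hk, by rw [hq], by rw [hr]⟩, by rw [hr]⟩
    · rintro ⟨k, ⟨hk, hp, hp'⟩, hr⟩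
      exact ⟨(c k).1, k, hk, Prod.ext rfl hp, Prod.ext hr hp'⟩
  rw [arrivals_eq, Set.InjOn.ncard_image, Set.ncard_coe_finset, Nat.count_eq_card_filter_range]
  intro k hk l hl hkl
  simp only [Finset.coe_filter, Finset.mem_range, Set.mem_ofPred_eq] at hk hl
  exact Nat.succ_injective (hinj hk.1 hl.1 (Prod.ext hkl (hk.2.2.trans hl.2.2.symm)))

theorem ncard_arrivals_pathEdges_eq_add_one {c : ℕ → σ × ℤ} {N : ℕ} {i : ℤ}
    (hinj : Set.InjOn c (Set.Iic N)) (hmove : MovesByOne (pathEdges c N))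
    (h0 : (c 0).2 ≤ i) (hN : i < (c N).2) :
    (arrivals (pathEdges c N) i (i + 1)).ncard =
      (arrivals (pathEdges c N) (i + 1) i).ncard + 1 := by
  have balance := count_upcrossing_add (h := fun k => (c k).2)
    (fun k hk => hmove _ _ ⟨k, hk, rfl, rfl⟩) i
  rw [if_neg h0.not_gt, if_pos hN] at balance
  rwa [ncard_arrivals_pathEdges hinj, ncard_arrivals_pathEdges hinj]

theorem exists_ne_pair_eq_of_card_eq_card_add {ι σ τ : Type*} [Fintype σ] [Fintype τ]
    {s : Finset ι} {R : ι → Finset σ} {L : ι → Finset τ} {m : ℕ}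
    (hcard : ∀ i ∈ s, (R i).card = (L i).card + m)
    (hs : (Fintype.card σ + Fintype.card τ).choose (Fintype.card τ + m) < s.card) :
    ∃ i ∈ s, ∃ j ∈ s, i ≠ j ∧ R i = R j ∧ L i = L j := by
  classical
  -- Complementing `L` makes the total size constant: `|R| + |Lᶜ| = |τ| + m`.
  have maps_to : ∀ i ∈ s, (R i).disjSum (L i)ᶜ ∈
      Finset.powersetCard (Fintype.card τ + m) (Finset.univ : Finset (σ ⊕ τ)) := by
    intro i hi
    have := hcard i hi
    have := (L i).card_le_univ
    rw [Finset.mem_powersetCard_univ, Finset.card_disjSum, Finset.card_compl]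
    lia
  obtain ⟨i, hi, j, hj, hij, heq⟩ := Finset.exists_ne_map_eq_of_card_lt_of_maps_to
    (by rwa [Finset.card_powersetCard, Finset.card_univ, Fintype.card_sum]) maps_to
  obtain ⟨hR, hL⟩ := Finset.disjSum_inj.1 heq
  exact ⟨i, hi, j, hj, hij, hR, compl_injective hL⟩

theorem exists_lt_sameCrossings [Fintype σ] {m : ℕ}
    (hcard : ∀ i : ℕ, i ≤ m →
      (arrivals E i (i + 1)).ncard = (arrivals E (i + 1) i).ncard + 1)
    (hm : (2 * Fintype.card σ).choose (Fintype.card σ + 1) ≤ m) :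
    ∃ i j : ℕ, i < j ∧ j ≤ m ∧ SameCrossings E i j := by
  classical
  obtain ⟨i, hi, j, hj, hij, hR, hL⟩ := exists_ne_pair_eq_of_card_eq_card_add
    (s := Finset.range (m + 1)) (m := 1)
    (R := fun i : ℕ => (arrivals E i (i + 1)).toFinset)
    (L := fun i : ℕ => (arrivals E (i + 1) i).toFinset)
    (fun i hi => by
      simpa only [Set.ncard_eq_toFinset_card'] using hcard i (Finset.mem_range_succ_iff.1 hi))
    (by rw [← two_mul, Finset.card_range]; lia)
  rw [Finset.mem_range_succ_iff] at hi hj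
  have hsame : SameCrossings E i j := ⟨Set.toFinset_inj.1 hR, Set.toFinset_inj.1 hL⟩
  rcases hij.lt_or_gt with hlt | hgt
  exacts [⟨i, j, hlt, hj, hsame⟩, ⟨j, i, hgt, hi, hsame.symm⟩]

end Crossing

section Splice

variable {σ : Type*} {E : σ × ℤ → σ × ℤ → Prop} {i j : ℤ}

/-- The configuration with the same state, `d` cells further to the right. -/
def shiftHead (d : ℤ) (x : σ × ℤ) : σ × ℤ :=
  (x.1, x.2 + d)

/-- When the cells `i + 1, …, j` are cut out of a tape, the cell now at position `p` was at
position `p + cutOffset i j p` before. -/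
def cutOffset (i j p : ℤ) : ℤ :=
  if p ≤ i then 0 else j - i

/-- The relation `E` after cutting out the cells `i + 1, …, j`. A move is looked up on the side of
the cut on which it starts, also when it crosses the cut. -/
def splice (E : σ × ℤ → σ × ℤ → Prop) (i j : ℤ) (x y : σ × ℤ) : Prop :=
  E (shiftHead (cutOffset i j x.2) x) (shiftHead (cutOffset i j x.2) y)

theorem cutOffset_of_le {p : ℤ} (hp : p ≤ i) : cutOffset i j p = 0 :=
  if_pos hp

theorem cutOffset_of_gt {p : ℤ} (hp : i < p) : cutOffset i j p = j - i :=
  if_neg hp.not_ge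

theorem shiftHead_injective (d : ℤ) : (shiftHead d : σ × ℤ → σ × ℤ).Injective :=
  fun _ _ h => Prod.ext (Prod.ext_iff.1 h).1 (add_right_cancel (Prod.ext_iff.1 h).2)

theorem shiftHead_zero (x : σ × ℤ) : shiftHead 0 x = x :=
  Prod.ext rfl (add_zero _)

theorem shiftHead_shiftHead (d e : ℤ) (x : σ × ℤ) :
    shiftHead d (shiftHead e x) = shiftHead (e + d) x :=
  Prod.ext rfl (add_assoc _ _ _)

theorem shiftHead_cutOffset_injective (hij : i ≤ j) :
    (fun x : σ × ℤ => shiftHead (cutOffset i j x.2) x).Injective := by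
  intro x y hxy
  have hpos : x.2 + cutOffset i j x.2 = y.2 + cutOffset i j y.2 := (Prod.ext_iff.1 hxy).2
  refine Prod.ext (Prod.ext_iff.1 hxy).1 ?_
  unfold cutOffset at hpos
  split_ifs at hpos <;> lia

-- Where a spliced move crosses the cut, it is replaced by the move of `E` that crosses the other
-- boundary in the same direction and arrives in the same state.
theorem MovesByOne.exists_pred_of_splice (hmove : MovesByOne E) (hcross : SameCrossings E i j)
    {x y : σ × ℤ} (hxy : splice E i j x y) :
    ∃ z, E z (shiftHead (cutOffset i j y.2) y) ∧
      (z.2 ≤ i + cutOffset i j y.2 ↔ x.2 ≤ i) := by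
  obtain ⟨q, p⟩ := x
  obtain ⟨r, p'⟩ := y
  have hpp' : p' = p + 1 ∨ p = p' + 1 := by
    have := hmove _ _ hxy
    simp only [shiftHead] at this
    lia
  simp only [splice, shiftHead] at hxy ⊢
  rcases le_or_gt p i with hp | hp <;> rcases le_or_gt p' i with hp' | hp'
  · rw [cutOffset_of_le hp] at hxy
    rw [cutOffset_of_le hp']
    exact ⟨_, hxy, by simp⟩
  · obtain ⟨rfl, rfl⟩ : p = i ∧ p' = p + 1 := by lia
    rw [cutOffset_of_le le_rfl, add_zero, add_zero] at hxy
    obtain ⟨q', hq'⟩ : r ∈ arrivals E j (j + 1) := hcross.1 ▸ ⟨q, hxy⟩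
    rw [cutOffset_of_gt hp', show p + 1 + (j - p) = j + 1 by ring]
    exact ⟨_, hq', by simp⟩
  · obtain ⟨rfl, rfl⟩ : p' = i ∧ p = p' + 1 := by lia
    rw [cutOffset_of_gt hp, show p' + 1 + (j - p') = j + 1 by ring, add_sub_cancel] at hxy
    obtain ⟨q', hq'⟩ : r ∈ arrivals E (p' + 1) p' := hcross.2 ▸ ⟨q, hxy⟩
    rw [cutOffset_of_le le_rfl, add_zero]
    exact ⟨_, hq', by simp⟩
  · rw [cutOffset_of_gt hp] at hxy
    rw [cutOffset_of_gt hp']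
    exact ⟨_, hxy, by simp only; lia⟩

theorem IsThread.leftUnique_splice {a b : σ × ℤ} (hE : IsThread E a b) (hmove : MovesByOne E)
    (hcross : SameCrossings E i j) : Relator.LeftUnique (splice E i j) := by
  intro x x' y hx hx'
  obtain ⟨z, hz, hside⟩ := hmove.exists_pred_of_splice hcross hx
  obtain ⟨z', hz', hside'⟩ := hmove.exists_pred_of_splice hcross hx'
  obtain rfl := hE.leftUnique hz hz'
  have same_offset : cutOffset i j x.2 = cutOffset i j x'.2 :=
    if_congr (hside.symm.trans hside') rfl rfl
  unfold splice at hx hx'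
  rw [← same_offset] at hx'
  exact shiftHead_injective _ (hE.leftUnique hx hx')

theorem IsThread.splice {a b : σ × ℤ} (hE : IsThread E a b) (hmove : MovesByOne E)
    (hij : i ≤ j) (hcross : SameCrossings E i j) (ha : a.2 ≤ i) (hb : j < b.2) :
    IsThread (splice E i j) a (shiftHead (i - j) b) where
  finite := (hE.finite.preimage (shiftHead_cutOffset_injective hij).injOn).subset
    fun _ ⟨_, hxy⟩ => ⟨_, hxy⟩
  leftUnique := hE.leftUnique_splice hmove hcross
  not_pred_start x hxa := by
    obtain ⟨z, hz, -⟩ := hmove.exists_pred_of_splice hcross hxa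
    rw [cutOffset_of_le ha, shiftHead_zero] at hz
    exact hE.not_pred_start z hz
  exists_succ x hx hxb := by
    have reached : shiftHead (cutOffset i j x.2) x = a ∨
        ∃ z, E z (shiftHead (cutOffset i j x.2) x) := by
      rcases hx with rfl | ⟨z, hz⟩
      · exact .inl (by rw [cutOffset_of_le ha, shiftHead_zero])
      · obtain ⟨z', hz', -⟩ := hmove.exists_pred_of_splice hcross hz
        exact .inr ⟨z', hz'⟩
    have ne_end : shiftHead (cutOffset i j x.2) x ≠ b := by
      rintro rfl
      rcases le_or_gt x.2 i with hxi | hxi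
      · rw [cutOffset_of_le hxi, shiftHead_zero] at hb
        lia
      · rw [cutOffset_of_gt hxi, shiftHead_shiftHead, sub_add_sub_cancel, sub_self,
          shiftHead_zero] at hxb
        exact hxb rfl
    obtain ⟨y, hy⟩ := hE.exists_succ _ reached ne_end
    refine ⟨shiftHead (-cutOffset i j x.2) y, ?_⟩
    rwa [_root_.splice, shiftHead_shiftHead, neg_add_cancel, shiftHead_zero]

end Splice

theorem tapeSym_take_append_drop {α : Type} {w : List α} {i j : ℕ} (hij : i ≤ j)
    (hj : j ≤ w.length) (p : ℤ) :
    tapeSym (w.take i ++ w.drop j) p = tapeSym w (p + cutOffset i j p) := by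
  have length_eq : (w.take i ++ w.drop j).length = w.length - (j - i) := by
    simp only [List.length_append, List.length_take, List.length_drop]
    lia
  unfold tapeSym
  rw [length_eq]
  rcases le_or_gt p i with hp | hp
  · rw [cutOffset_of_le hp, add_zero, if_neg (c := p = (w.length : ℤ) + 1) (by lia),
      if_neg (c := p = ((w.length - (j - i) : ℕ) : ℤ) + 1) (by lia)]
    split_ifs with h0 hpos
    · rfl
    · rw [List.getElem?_append_left (by rw [List.length_take]; lia),
        List.getElem?_take_of_lt (by lia)]
    · rfl
  · have at_end : p = ((w.length - (j - i) : ℕ) : ℤ) + 1 ↔ p + (j - i) = (w.length : ℤ) + 1 := by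
      lia
    have index_eq : j + ((p - 1).toNat - i) = (p + (j - i) - 1).toNat := by lia
    rw [cutOffset_of_gt hp, if_neg (by lia), if_neg (c := p + (j - i) = 0) (by lia),
      if_pos (c := 0 < p) (by lia), if_pos (c := 0 < p + ((j : ℤ) - i)) (by lia)]
    refine if_congr at_end rfl ?_
    rw [List.getElem?_append_right (by rw [List.length_take]; lia), List.getElem?_drop,
      List.length_take_of_le (by lia), index_eq]

namespace TwoDFA

variable {α σ : Type} {A : TwoDFA α σ} {w : List α}

theorem movesByOne_of_le_step {E : σ × ℤ → σ × ℤ → Prop} (hstep : E ≤ A.Step w) :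
    MovesByOne E := by
  intro x y hxy
  obtain ⟨_, -, _, d, -, rfl⟩ := hstep x y hxy
  cases d
  · exact .inr (by simp)
  · exact .inl (by simp)

theorem step_of_step_shiftHead {w' : List α} {d : ℤ} {x y : σ × ℤ}
    (hsym : tapeSym w' x.2 = tapeSym w (x.2 + d))
    (h : A.Step w (shiftHead d x) (shiftHead d y)) : A.Step w' x y := by
  obtain ⟨s, hs, r, e, hδ, hy⟩ := h
  refine ⟨s, hsym.trans hs, r, e, hδ, shiftHead_injective d (hy.trans ?_)⟩
  exact Prod.ext rfl (add_right_comm _ _ _)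

theorem accepts_take_append_drop {E : σ × ℤ → σ × ℤ → Prop} {q : σ} (hq : q ∈ A.F)
    (hstep : E ≤ A.Step w) (hE : IsThread E (A.init, 0) (q, (w.length : ℤ) + 1))
    {i j : ℕ} (hij : i ≤ j) (hj : j ≤ w.length) (hcross : SameCrossings E i j) :
    A.Accepts (w.take i ++ w.drop j) := by
  have length_eq : ((w.take i ++ w.drop j).length : ℤ) + 1 = w.length + 1 + (i - j) := by
    simp only [List.length_append, List.length_take, List.length_drop]
    lia
  have spliced := hE.splice (movesByOne_of_le_step hstep) (Int.ofNat_le.2 hij) hcross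
    (Int.natCast_nonneg i) (by simp only; lia)
  refine ⟨q, hq, length_eq ▸ ReflTransGen.mono (fun x y hxy => ?_) _ _ spliced.reflTransGen⟩
  exact step_of_step_shiftHead (tapeSym_take_append_drop hij hj x.2) (hstep _ _ hxy)

theorem Accepts.exists_length_lt [Fintype σ] (hw : A.Accepts w)
    (hlen : (2 * Fintype.card σ).choose (Fintype.card σ + 1) ≤ w.length) :
    ∃ w', A.Accepts w' ∧ w'.length < w.length := by
  obtain ⟨q, hq, hreach⟩ := hw
  obtain ⟨N, c, h0, hN, hpath, hinj⟩ := exists_injOn_path_of_reflTransGen hreach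
  have hstep : pathEdges c N ≤ A.Step w := by
    rintro _ _ ⟨k, hk, rfl, rfl⟩
    exact hpath k hk
  have hcard (i : ℕ) (hi : i ≤ w.length) : (arrivals (pathEdges c N) i (i + 1)).ncard =
      (arrivals (pathEdges c N) (i + 1) i).ncard + 1 :=
    ncard_arrivals_pathEdges_eq_add_one hinj (movesByOne_of_le_step hstep)
      (by simp [h0]) (by simp only [hN]; lia)
  obtain ⟨i, j, hij, hj, hcross⟩ := exists_lt_sameCrossings hcard hlen
  refine ⟨w.take i ++ w.drop j, accepts_take_append_drop hq hstep
    (h0 ▸ hN ▸ isThread_pathEdges hinj) hij.le hj hcross, ?_⟩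
  simp only [List.length_append, List.length_take, List.length_drop]
  lia

end TwoDFA

theorem shortest_accepted_le_of_2dfa_general {α σ : Type} [Fintype σ] (A : TwoDFA α σ)
    (hne : ∃ w, A.Accepts w) :
    ∃ w, A.Accepts w ∧ w.length < (2 * Fintype.card σ).choose (Fintype.card σ + 1) := by
  obtain ⟨w, hw⟩ := exists_minimalFor_of_wellFoundedLT A.Accepts List.length hne
  refine ⟨w, hw.prop, ?_⟩
  by_contra! hlen
  obtain ⟨w', hw', hlt⟩ := hw.prop.exists_length_lt hlen
  exact hw.not_prop_of_lt hlt hw'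

/-- Let `n ≥ 1` and let `A` be a 2DFA with `n` states that accepts at least one string.
Then the length of the shortest string accepted by `A` is at most `C(2n, n) − 1`. -/
theorem shortest_accepted_le_of_2dfa (n : ℕ) (hn : 1 ≤ n)
    (α σ : Type) [Fintype α] [Fintype σ] (hcard : Fintype.card σ = n)
    (A : TwoDFA α σ) (hne : ∃ w, A.Accepts w) :
    ∃ w, A.Accepts w ∧ w.length ≤ Nat.choose (2 * n) n - 1 := by
  obtain ⟨w, hw, hlt⟩ := shortest_accepted_le_of_2dfa_general A hne
  exact ⟨w, hw, Nat.le_sub_one_of_lt (hlt.trans_le (hcard ▸ Nat.choose_le_centralBinom _ _))⟩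
end

section
/- For every k ≥ 2 and ℓ ≥ 0, there exists a direction-determinate two-way deterministic finite automaton with set of states Q = Q⁺ ∪ Q⁻, where |Q⁺| = k and |Q⁻| = ℓ, which accepts at least one string, and such that the length of the shortest string it accepts is exactly C(k+ℓ, ℓ+1) − 1, where C denotes the binomial coefficient. -/
/-!
At every boundary between two tape cells, a run that finally leaves to the right crosses in states
`x₀, r₁, x₁, …, r_m, x_m`, alternately right-moving and left-moving. Choosing sets of `m + 1` and
`m` states, there are `∑ₘ C(k, m + 1) C(ℓ, m) = C(k + ℓ, ℓ + 1)` such sequences in which both the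
`xᵢ` and the `rᵢ` increase. List them as `c₀ < c₁ < ⋯ < c_M` in lexicographic order, with the
left-moving states compared in reverse. Over the letters `0, …, M - 1`, let the letter `a` follow
`c_a` at its left boundary and `c_{a+1}` at its right boundary, let `⊢` follow `c₀`, and let `⊣`
follow `c_M`. If the cell to the left of a boundary follows `c_i` and the cell to its right follows
`c_j`, then the run can leave the boundary to the right only if `j ≤ i`: it follows the common
beginning of the two sequences; if the next state moves right, it comes from `c_i` and must occur
in what remains of `c_j`, and if it moves left, it comes from `c_j` and must occur in what remains
of `c_i`; and the states increase. Adding these inequalities over all boundaries of an accepted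
word `w` telescopes to `M ≤ |w|`. On the word `0 1 ⋯ (M - 1)` both cells at every boundary follow
the same sequence, so this word is accepted.
-/

open Relation (ReflTransGen)

section Tape

variable {α σ : Type}

theorem tapeSym_zero (w : List α) : tapeSym w 0 = some .lend := by
  simp [tapeSym]

theorem tapeSym_length_add_one (w : List α) : tapeSym w (w.length + 1) = some .rend := by
  rw [tapeSym, if_neg (by lia), if_pos rfl]

theorem tapeSym_coe_add_one (w : List α) (a : Fin w.length) :
    tapeSym w (a + 1) = some (.letter w[a]) := by
  have ha := a.isLt
  rw [tapeSym, if_neg (by lia), if_neg (by lia), if_pos (by lia)]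
  simp

theorem TwoDFA.step_iff_of_tapeSym_eq_some {A : TwoDFA α σ} {w : List α} {i : ℤ}
    {s : TapeSymbol α} (hs : tapeSym w i = some s) {q : σ} {c : σ × ℤ} :
    A.Step w (q, i) c ↔ ∃ r d, A.δ q s = some (r, d) ∧ c = (r, i + if d then 1 else -1) := by
  simp [TwoDFA.Step, hs]

end Tape

/-- What an automaton with right-moving states `κ` and left-moving states `ρ` is told about one
boundary between two adjacent tape cells. The cell to the left of the boundary uses `entry` (the
state in which the boundary is first crossed) and `forth` (how a left-moving state is turned back),
the cell to the right uses `back` (how a right-moving state is turned back) and `exit` (the only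
state in which the head may go on to the right). -/
structure Gate (κ ρ : Type*) where
  entry : κ
  exit : κ
  back : κ → Option ρ
  forth : ρ → Option κ

namespace Gate

/-- The head arrives to the right of a boundary in state `x`, is turned back there by `H`, and is
turned forth again on the left by `G`, in state `y`. -/
def Bounce {κ ρ : Type*} (G H : Gate κ ρ) (x y : κ) : Prop :=
  ∃ r, H.back x = some r ∧ G.forth r = some y

/-- A boundary is eventually left to the right if the cell to its left follows the gate `G` and the
cell to its right follows the gate `H`. -/
def Passes {κ ρ : Type*} (G H : Gate κ ρ) : Prop :=
  ReflTransGen (Bounce G H) G.entry H.exit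

variable {κ ρ : Type} {M : ℕ}

/-- The automaton over the letters `0, …, M - 1` for a sequence of gates `g 0, …, g M`: the
letter `a` follows the gate `g a` towards its left boundary and `g (a + 1)` towards its right
boundary, `⊢` follows `g 0` and `⊣` follows `g M`. -/
def automaton [DecidableEq κ] (g : Fin (M + 1) → Gate κ ρ) : TwoDFA (Fin M) (κ ⊕ ρ) where
  init := .inl (g 0).entry
  δ
    | .inl _, .lend => some (.inl (g 0).entry, true)
    | .inl x, .letter a =>
      if x = (g a.castSucc).exit then some (.inl (g a.succ).entry, true)
      else ((g a.castSucc).back x).map fun r => (.inr r, false)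
    | .inl x, .rend => ((g (Fin.last M)).back x).map fun r => (.inr r, false)
    | .inr r, .lend => ((g 0).forth r).map fun y => (.inl y, true)
    | .inr r, .letter a => ((g a.succ).forth r).map fun y => (.inl y, true)
    | .inr _, .rend => none
  F := {.inl (g (Fin.last M)).exit}

/-- The index of the gate followed, on the input `w`, by the cell to the left of the boundary
between the positions `p` and `p + 1`. -/
def leftIndex (w : List (Fin M)) : Fin (w.length + 1) → Fin (M + 1) :=
  Fin.cons 0 fun a => w[a].succ

/-- The index of the gate followed, on the input `w`, by the cell to the right of the boundary
between the positions `p` and `p + 1`. -/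
def rightIndex (w : List (Fin M)) : Fin (w.length + 1) → Fin (M + 1) :=
  Fin.snoc (α := fun _ => Fin (M + 1)) (fun a => w[a].castSucc) (Fin.last M)

section Index

variable (w : List (Fin M))

@[simp]
theorem leftIndex_zero : leftIndex w 0 = 0 := rfl

@[simp]
theorem leftIndex_succ (a : Fin w.length) : leftIndex w a.succ = w[a].succ := rfl

@[simp]
theorem rightIndex_last : rightIndex w (Fin.last _) = Fin.last M := by
  simp [rightIndex]

@[simp]
theorem rightIndex_castSucc (a : Fin w.length) : rightIndex w a.castSucc = w[a].castSucc := by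
  simp [rightIndex]

-- The letter `a` contributes `a` on the right of one boundary, `a + 1` on the left of the next one.
theorem le_length_of_rightIndex_le_leftIndex (h : ∀ p, rightIndex w p ≤ leftIndex w p) :
    M ≤ w.length := by
  have hsum : ∑ p, (rightIndex w p : ℕ) ≤ ∑ p, (leftIndex w p : ℕ) :=
    Finset.sum_le_sum fun p _ => h p
  rw [Fin.sum_univ_castSucc, Fin.sum_univ_succ] at hsum
  simpa [Finset.sum_add_distrib] using hsum

theorem leftIndex_finRange (p : Fin ((List.finRange M).length + 1)) :
    (leftIndex (List.finRange M) p : ℕ) = p := by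
  cases p using Fin.cases <;> simp

theorem rightIndex_finRange (p : Fin ((List.finRange M).length + 1)) :
    (rightIndex (List.finRange M) p : ℕ) = p := by
  cases p using Fin.lastCases <;> simp

end Index

/-- The configurations that a run of `automaton g` on `w` can go through: the head moves around
some boundary `p`, and has passed all the boundaries before. -/
inductive Visited (g : Fin (M + 1) → Gate κ ρ) (w : List (Fin M)) : (κ ⊕ ρ) × ℤ → Prop
  | start : Visited g w (.inl (g 0).entry, 0)
  | rightward {p : Fin (w.length + 1)} {x : κ}
      (hpass : ∀ q < p, (g (leftIndex w q)).Passes (g (rightIndex w q)))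
      (hx : ReflTransGen (Bounce (g (leftIndex w p)) (g (rightIndex w p)))
        (g (leftIndex w p)).entry x) :
      Visited g w (.inl x, p + 1)
  | leftward {p : Fin (w.length + 1)} {x : κ} {r : ρ}
      (hpass : ∀ q < p, (g (leftIndex w q)).Passes (g (rightIndex w q)))
      (hx : ReflTransGen (Bounce (g (leftIndex w p)) (g (rightIndex w p)))
        (g (leftIndex w p)).entry x)
      (hr : (g (rightIndex w p)).back x = some r) :
      Visited g w (.inr r, p)

variable {g : Fin (M + 1) → Gate κ ρ} {w : List (Fin M)}

theorem Visited.passes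
    (h : Visited g w (.inl (g (Fin.last M)).exit, (w.length : ℤ) + 1)) (p : Fin (w.length + 1)) :
    (g (leftIndex w p)).Passes (g (rightIndex w p)) := by
  generalize hc : ((.inl (g (Fin.last M)).exit, (w.length : ℤ) + 1) : (κ ⊕ ρ) × ℤ) = c at h
  cases h with
  | start => grind
  | @rightward q x hpass hx =>
    obtain ⟨rfl, hq⟩ : (g (Fin.last M)).exit = x ∧ (w.length : ℤ) + 1 = q + 1 := by simpa using hc
    obtain rfl : q = Fin.last _ := Fin.ext (by simpa using hq.symm)
    rcases (Fin.le_last p).lt_or_eq with hlt | rfl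
    · exact hpass p hlt
    · simpa [Passes] using hx
  | leftward => simp at hc

variable [DecidableEq κ] {x : κ} {r : ρ} {c c' : (κ ⊕ ρ) × ℤ}

theorem automaton_directionDeterminate {q s : κ ⊕ ρ} {t : TapeSymbol (Fin M)} {d : Bool}
    (h : (automaton g).δ q t = some (s, d)) :
    (d = true → ∃ x, s = .inl x) ∧ (d = false → ∃ r, s = .inr r) := by
  rcases q with x | r <;> rcases t with _ | _ | a <;> simp only [automaton] at h
  all_goals grind [Option.map_eq_some_iff]

theorem step_inl_zero_iff :
    (automaton g).Step w (.inl x, 0) c ↔ c = (.inl (g 0).entry, 1) := by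
  simp [TwoDFA.step_iff_of_tapeSym_eq_some (tapeSym_zero w), automaton]

theorem step_inr_iff (p : Fin (w.length + 1)) :
    (automaton g).Step w (.inr r, p) c ↔
      ∃ y, (g (leftIndex w p)).forth r = some y ∧ c = (.inl y, (p : ℤ) + 1) := by
  cases p using Fin.cases with
  | zero =>
    simp [TwoDFA.step_iff_of_tapeSym_eq_some (tapeSym_zero w), automaton]
  | succ a =>
    simp [TwoDFA.step_iff_of_tapeSym_eq_some (tapeSym_coe_add_one w a), automaton]

theorem step_inl_length_iff :
    (automaton g).Step w (.inl x, w.length + 1) c ↔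
      ∃ r, (g (Fin.last M)).back x = some r ∧ c = (.inr r, (w.length : ℤ)) := by
  simp [TwoDFA.step_iff_of_tapeSym_eq_some (tapeSym_length_add_one w), automaton]

theorem step_inl_coe_iff (a : Fin w.length) :
    (automaton g).Step w (.inl x, a + 1) c ↔
      if x = (g w[a].castSucc).exit then c = (.inl (g w[a].succ).entry, (a : ℤ) + 1 + 1)
      else ∃ r, (g w[a].castSucc).back x = some r ∧ c = (.inr r, (a : ℤ)) := by
  rw [TwoDFA.step_iff_of_tapeSym_eq_some (tapeSym_coe_add_one w a)]
  split_ifs with hx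
  · simp [automaton, hx]
  · simp only [Fin.getElem_fin] at hx
    simp [automaton, hx]

theorem step_of_back {p : Fin (w.length + 1)} (hx : x ≠ (g (rightIndex w p)).exit)
    (hr : (g (rightIndex w p)).back x = some r) :
    (automaton g).Step w (.inl x, p + 1) (.inr r, p) := by
  cases p using Fin.lastCases with
  | last => exact step_inl_length_iff.2 ⟨r, by simpa using hr, rfl⟩
  | cast a =>
    rw [rightIndex_castSucc] at hx hr
    refine (step_inl_coe_iff a).2 ?_
    rw [if_neg hx]
    exact ⟨r, hr, rfl⟩

theorem reflTransGen_step_of_bounces {p : Fin (w.length + 1)}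
    (h : ReflTransGen (Bounce (g (leftIndex w p)) (g (rightIndex w p))) x
      (g (rightIndex w p)).exit) :
    ReflTransGen ((automaton g).Step w) (.inl x, p + 1)
      (.inl (g (rightIndex w p)).exit, p + 1) := by
  induction h using ReflTransGen.head_induction_on with
  | refl => exact .refl
  | @head x y hxy _ ih =>
    by_cases hx : x = (g (rightIndex w p)).exit
    · rw [hx]
    · obtain ⟨r, hback, hforth⟩ := hxy
      exact .head (step_of_back hx hback) (.head ((step_inr_iff p).2 ⟨y, hforth, rfl⟩) ih)

theorem reflTransGen_step_entry
    (h : ∀ p, (g (leftIndex w p)).Passes (g (rightIndex w p))) (p : Fin (w.length + 1)) :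
    ReflTransGen ((automaton g).Step w) ((automaton g).init, 0)
      (.inl (g (leftIndex w p)).entry, p + 1) := by
  induction p using Fin.induction with
  | zero => exact .single (step_inl_zero_iff.2 (by simp))
  | succ a ih =>
    refine (ih.trans (reflTransGen_step_of_bounces (h _))).tail ?_
    simp [step_inl_coe_iff]

theorem Visited.step (h : Visited g w c) (hc : (automaton g).Step w c c') : Visited g w c' := by
  cases h with
  | start =>
    rw [step_inl_zero_iff.1 hc]
    exact .rightward (p := 0) (by simp) .refl
  | @rightward p x hpass hx =>
    cases p using Fin.lastCases with
    | last =>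
      obtain ⟨r, hr, rfl⟩ := step_inl_length_iff.1 hc
      exact .leftward hpass hx (by simpa using hr)
    | cast a =>
      rw [Fin.val_castSucc, step_inl_coe_iff] at hc
      split_ifs at hc with hexit
      · have hpass' : ∀ q < a.succ, (g (leftIndex w q)).Passes (g (rightIndex w q)) := by
          intro q hq
          rcases (Fin.le_castSucc_iff.2 hq).lt_or_eq with hlt | rfl
          · exact hpass q hlt
          · simpa [Passes, hexit] using hx
        simpa [hc] using Visited.rightward hpass' .refl
      · obtain ⟨r, hr, rfl⟩ := hc
        exact .leftward (p := a.castSucc) hpass hx (by simpa using hr)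
  | @leftward p x r hpass hx hr =>
    obtain ⟨y, hy, rfl⟩ := (step_inr_iff p).1 hc
    exact .rightward hpass (hx.tail ⟨r, hr, hy⟩)

theorem accepts_automaton_iff :
    (automaton g).Accepts w ↔ ∀ p, (g (leftIndex w p)).Passes (g (rightIndex w p)) := by
  constructor
  · rintro ⟨q, rfl, hrun⟩
    have hvisited : Visited g w (.inl (g (Fin.last M)).exit, (w.length : ℤ) + 1) := by
      generalize ((.inl (g (Fin.last M)).exit, (w.length : ℤ) + 1) : (κ ⊕ ρ) × ℤ) = c at hrun ⊢
      induction hrun with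
      | refl => exact .start
      | tail _ hc ih => exact ih.step hc
    exact hvisited.passes
  · intro h
    refine ⟨.inl (g (Fin.last M)).exit, rfl, ?_⟩
    have hlast := reflTransGen_step_of_bounces (h (Fin.last _))
    rw [rightIndex_last] at hlast
    exact (reflTransGen_step_entry h (Fin.last _)).trans hlast

theorem le_length_of_accepts (h : ∀ i j, (g i).Passes (g j) → j ≤ i)
    (hw : (automaton g).Accepts w) : M ≤ w.length :=
  le_length_of_rightIndex_le_leftIndex w fun p => h _ _ (accepts_automaton_iff.1 hw p)

theorem accepts_finRange (h : ∀ i, (g i).Passes (g i)) :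
    (automaton g).Accepts (List.finRange M) := by
  refine accepts_automaton_iff.2 fun p => ?_
  have hp : leftIndex (List.finRange M) p = rightIndex (List.finRange M) p :=
    Fin.ext ((leftIndex_finRange p).trans (rightIndex_finRange p).symm)
  rw [hp]
  exact h _

end Gate

/-- A crossing sequence of one boundary: the states `x₀, r₁, x₁, …, r_m, x_m` in which a run that
finally leaves to the right crosses it, with right-moving states `xᵢ : κ` and left-moving states
`rᵢ : ρ` alternating. -/
inductive CrossingSeq (κ ρ : Type*) where
  | single (x : κ)
  | cons (x : κ) (r : ρ) (c : CrossingSeq κ ρ)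

namespace CrossingSeq

variable {κ ρ : Type*}

/-- The right-moving states `x₀, …, x_m` of a crossing sequence. -/
def rights : CrossingSeq κ ρ → List κ
  | single x => [x]
  | cons x _ c => x :: c.rights

/-- The left-moving states `r₁, …, r_m` of a crossing sequence. -/
def lefts : CrossingSeq κ ρ → List ρ
  | single _ => []
  | cons _ r c => r :: c.lefts

/-- The state `x₀` of the first crossing. -/
def head : CrossingSeq κ ρ → κ
  | single x => x
  | cons x _ _ => x

theorem head_mem_rights (c : CrossingSeq κ ρ) : c.head ∈ c.rights := by
  cases c <;> simp [head, rights]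

theorem length_rights (c : CrossingSeq κ ρ) : c.rights.length = c.lefts.length + 1 := by
  induction c <;> simp_all [rights, lefts]

theorem ext_rights_lefts {c d : CrossingSeq κ ρ} (hr : c.rights = d.rights)
    (hl : c.lefts = d.lefts) : c = d := by
  induction c generalizing d <;> cases d <;> grind [rights, lefts]

theorem exists_rights_lefts {xs : List κ} {rs : List ρ} (h : xs.length = rs.length + 1) :
    ∃ c : CrossingSeq κ ρ, c.rights = xs ∧ c.lefts = rs := by
  induction rs generalizing xs with
  | nil =>
    obtain ⟨x, rfl⟩ := List.length_eq_one_iff.1 h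
    exact ⟨single x, rfl, rfl⟩
  | cons r rs ih =>
    obtain ⟨x, xs, rfl⟩ := List.exists_cons_of_length_eq_add_one h
    obtain ⟨c, rfl, rfl⟩ := ih (by simpa using h)
    exact ⟨cons x r c, rfl, rfl⟩

section Order

/-- The crossing sequence as a word, for the lexicographic comparison of crossing sequences.
The order of the left-moving states is reversed. -/
def toLexWord : CrossingSeq κ ρ → List (κ ⊕ₗ ρᵒᵈ)
  | single x => [Sum.inlₗ x]
  | cons x r c => Sum.inlₗ x :: Sum.inrₗ (OrderDual.toDual r) :: c.toLexWord

theorem toLexWord_injective : Function.Injective (toLexWord : CrossingSeq κ ρ → _) := by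
  intro c d h
  induction c generalizing d <;> cases d <;> grind [toLexWord, toLex_inj, OrderDual.toDual_inj]

variable [LinearOrder κ] [LinearOrder ρ]

instance : LinearOrder (CrossingSeq κ ρ) :=
  LinearOrder.lift' toLexWord toLexWord_injective

theorem lt_of_head_lt {c d : CrossingSeq κ ρ} (h : c.head < d.head) : c < d := by
  change c.toLexWord < d.toLexWord
  cases c <;> cases d <;> exact List.Lex.rel (Sum.Lex.inl_lt_inl_iff.2 h)

theorem single_head_le (c : CrossingSeq κ ρ) : single c.head ≤ c := by
  cases c with
  | single x => exact le_rfl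
  | cons x r c => exact List.cons_le_cons _ (le_of_lt List.Lex.nil)

theorem cons_lt_cons_of_gt {x : κ} {r s : ρ} (h : s < r) (c d : CrossingSeq κ ρ) :
    cons x r c < cons x s d :=
  List.Lex.cons (List.Lex.rel (Sum.Lex.inr_lt_inr_iff.2 (OrderDual.toDual_lt_toDual.2 h)))

theorem cons_le_cons {c d : CrossingSeq κ ρ} (x : κ) (r : ρ) (h : c ≤ d) :
    cons x r c ≤ cons x r d :=
  List.cons_le_cons _ (List.cons_le_cons _ h)

/-- Both the right-moving and the left-moving states of the crossing sequence increase. -/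
def Increasing (c : CrossingSeq κ ρ) : Prop :=
  c.rights.SortedLT ∧ c.lefts.SortedLT

theorem increasing_cons_iff {x : κ} {r : ρ} {c : CrossingSeq κ ρ} :
    (cons x r c).Increasing ↔
      (∀ y ∈ c.rights, x < y) ∧ (∀ s ∈ c.lefts, r < s) ∧ c.Increasing := by
  simp only [Increasing, rights, lefts, List.sortedLT_iff_pairwise, List.pairwise_cons]
  tauto

end Order

section Count

variable [LinearOrder κ] [LinearOrder ρ] [Fintype ρ]

/-- The set coding an increasing crossing sequence: the right-moving states that occur in it and the
left-moving states that do not, so that its size does not depend on the length of the sequence. -/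
def code (c : CrossingSeq κ ρ) : Finset (κ ⊕ ρ) :=
  c.rights.toFinset.disjSum c.lefts.toFinsetᶜ

theorem Increasing.card_code {c : CrossingSeq κ ρ} (hc : c.Increasing) :
    c.code.card = Fintype.card ρ + 1 := by
  have hle := Finset.card_le_univ c.lefts.toFinset
  rw [List.toFinset_card_of_nodup hc.2.nodup] at hle
  rw [code, Finset.card_disjSum, Finset.card_compl, List.toFinset_card_of_nodup hc.1.nodup,
    List.toFinset_card_of_nodup hc.2.nodup, length_rights]
  lia

theorem Increasing.eq_of_code_eq {c d : CrossingSeq κ ρ} (hc : c.Increasing) (hd : d.Increasing)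
    (h : c.code = d.code) : c = d := by
  have hright : c.rights.toFinset = d.rights.toFinset := by
    simpa [code] using congrArg Finset.toLeft h
  have hleft : c.lefts.toFinset = d.lefts.toFinset := by
    simpa [code] using congrArg Finset.toRight h
  exact ext_rights_lefts
    (hc.1.eq_of_mem_iff hd.1 (by simpa [Finset.ext_iff] using hright))
    (hc.2.eq_of_mem_iff hd.2 (by simpa [Finset.ext_iff] using hleft))

theorem exists_increasing_code_eq {X : Finset (κ ⊕ ρ)} (hX : X.card = Fintype.card ρ + 1) :
    ∃ c : CrossingSeq κ ρ, c.Increasing ∧ c.code = X := by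
  have hlength : X.toLeft.sort.length = X.toRightᶜ.sort.length + 1 := by
    have hle := Finset.card_le_univ X.toRight
    have hcard := X.card_toLeft_add_card_toRight
    rw [Finset.length_sort, Finset.length_sort, Finset.card_compl]
    lia
  obtain ⟨c, hright, hleft⟩ := exists_rights_lefts hlength
  refine ⟨c, ⟨?_, ?_⟩, ?_⟩
  · exact hright ▸ Finset.sortedLT_sort _
  · exact hleft ▸ Finset.sortedLT_sort _
  · rw [code, hright, hleft, Finset.sort_toFinset, Finset.sort_toFinset, compl_compl,
      Finset.toLeft_disjSum_toRight]

variable [Fintype κ]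

theorem card_increasing :
    Nat.card {c : CrossingSeq κ ρ // c.Increasing} =
      (Fintype.card κ + Fintype.card ρ).choose (Fintype.card ρ + 1) := by
  let f : {c : CrossingSeq κ ρ // c.Increasing} →
      {X : Finset (κ ⊕ ρ) // X.card = Fintype.card ρ + 1} :=
    fun c => ⟨c.1.code, c.2.card_code⟩
  have hinj : Function.Injective f := fun c d h =>
    Subtype.ext (c.2.eq_of_code_eq d.2 (congrArg Subtype.val h))
  have hsurj : Function.Surjective f := fun ⟨X, hX⟩ =>
    let ⟨c, hc, hcX⟩ := exists_increasing_code_eq hX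
    ⟨⟨c, hc⟩, Subtype.ext hcX⟩
  rw [Nat.card_eq_of_bijective f ⟨hinj, hsurj⟩, Nat.card_eq_fintype_card,
    Fintype.card_finset_len, Fintype.card_sum]

theorem exists_strictMono_increasing {M : ℕ}
    (hM : M + 1 = (Fintype.card κ + Fintype.card ρ).choose (Fintype.card ρ + 1)) :
    ∃ c : Fin (M + 1) → CrossingSeq κ ρ, StrictMono c ∧ ∀ i, (c i).Increasing := by
  have hcard := card_increasing (κ := κ) (ρ := ρ)
  rw [← hM] at hcard
  have : Finite {c : CrossingSeq κ ρ // c.Increasing} :=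
    Nat.finite_of_card_ne_zero (by simp [hcard])
  have := Fintype.ofFinite {c : CrossingSeq κ ρ // c.Increasing}
  rw [Nat.card_eq_fintype_card] at hcard
  let e := Fintype.orderIsoFinOfCardEq _ hcard
  exact ⟨fun i => e i, fun _ _ hij => e.strictMono hij, fun i => (e i).2⟩

end Count

section Gate

/-- The gate that makes a run follow the crossing sequence `x₀, r₁, x₁, …, r_m, x_m`: it turns `xᵢ`
back into `rᵢ₊₁` and `rᵢ` forth into `xᵢ`. -/
def gate [DecidableEq κ] [DecidableEq ρ] : CrossingSeq κ ρ → Gate κ ρ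
  | single x => ⟨x, x, fun _ => none, fun _ => none⟩
  | cons x r c =>
    { entry := x
      exit := c.gate.exit
      back := fun y => if y = x then some r else c.gate.back y
      forth := fun s => if s = r then some c.head else c.gate.forth s }

section Mem

variable [DecidableEq κ] [DecidableEq ρ] {c : CrossingSeq κ ρ} {x : κ} {r : ρ}

theorem gate_entry (c : CrossingSeq κ ρ) : c.gate.entry = c.head := by
  cases c <;> rfl

theorem gate_exit_mem_rights (c : CrossingSeq κ ρ) : c.gate.exit ∈ c.rights := by
  induction c <;> simp_all [gate, rights]

theorem mem_of_gate_back_eq_some (h : c.gate.back x = some r) : x ∈ c.rights ∧ r ∈ c.lefts := by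
  induction c <;> grind [gate, rights, lefts]

theorem mem_of_gate_forth_eq_some (h : c.gate.forth r = some x) : r ∈ c.lefts ∧ x ∈ c.rights := by
  induction c <;> grind [gate, rights, lefts, head_mem_rights]

theorem head_mem_rights_of_passes {d : CrossingSeq κ ρ} (h : c.gate.Passes d.gate) :
    c.head ∈ d.rights := by
  rw [← gate_entry]
  rcases h.cases_head with hexit | ⟨y, ⟨r, hback, -⟩, -⟩
  · exact hexit ▸ gate_exit_mem_rights d
  · exact (mem_of_gate_back_eq_some hback).1

end Mem

variable [LinearOrder κ] [LinearOrder ρ] {c d : CrossingSeq κ ρ} {a x y : κ} {r : ρ}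

theorem bounce_cons_of_bounce (hd : (cons a r d).Increasing) (h : Gate.Bounce c.gate d.gate x y) :
    Gate.Bounce (cons a r c).gate (cons a r d).gate x y := by
  obtain ⟨s, hback, hforth⟩ := h
  obtain ⟨hx, hs⟩ := mem_of_gate_back_eq_some hback
  rw [increasing_cons_iff] at hd
  have hax : a < x := hd.1 x hx
  have hrs : r < s := hd.2.1 s hs
  exact ⟨s, by simp [gate, hax.ne', hback], by simp [gate, hrs.ne', hforth]⟩

theorem bounce_of_bounce_cons (hc : (cons a r c).Increasing) (hd : (cons a r d).Increasing)
    (hx : a < x) (h : Gate.Bounce (cons a r c).gate (cons a r d).gate x y) :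
    Gate.Bounce c.gate d.gate x y ∧ a < y := by
  rw [increasing_cons_iff] at hc hd
  obtain ⟨s, hback, hforth⟩ := h
  have hback' : d.gate.back x = some s := by simpa [gate, hx.ne'] using hback
  have hrs : r < s := hd.2.1 s (mem_of_gate_back_eq_some hback').2
  have hforth' : c.gate.forth s = some y := by simpa [gate, hrs.ne'] using hforth
  exact ⟨⟨s, hback', hforth'⟩, hc.1 y (mem_of_gate_forth_eq_some hforth').2⟩

theorem Increasing.passes_self (hc : c.Increasing) : c.gate.Passes c.gate := by
  induction c with
  | single x => exact .refl
  | cons x r c ih =>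
    have hfirst : Gate.Bounce (cons x r c).gate (cons x r c).gate x c.head :=
      ⟨r, by simp [gate], by simp [gate]⟩
    have hrest := ReflTransGen.mono (fun _ _ => bounce_cons_of_bounce hc) _ _
      (ih (increasing_cons_iff.1 hc).2.2)
    exact .head hfirst (gate_entry c ▸ hrest)

theorem Increasing.exists_bounce_of_passes_cons (hd : (cons a r d).Increasing)
    (h : c.gate.Passes (cons a r d).gate) (ha : c.head = a) :
    ∃ y, c.gate.forth r = some y ∧
      ReflTransGen (Gate.Bounce c.gate (cons a r d).gate) y d.gate.exit := by
  rw [Gate.Passes, gate_entry, ha] at h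
  rcases h.cases_head with hexit | ⟨y, ⟨s, hback, hforth⟩, hrest⟩
  · exact absurd hexit ((increasing_cons_iff.1 hd).1 _ (gate_exit_mem_rights d)).ne
  · obtain rfl : r = s := by simpa [gate] using hback
    exact ⟨y, hforth, hrest⟩

theorem Increasing.passes_of_passes_cons (hc : (cons a r c).Increasing)
    (hd : (cons a r d).Increasing) (h : (cons a r c).gate.Passes (cons a r d).gate) :
    c.gate.Passes d.gate := by
  obtain ⟨y, hforth, hrest⟩ := hd.exists_bounce_of_passes_cons h rfl
  obtain rfl : c.head = y := by simpa [gate] using hforth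
  have hhead : a < c.head := (increasing_cons_iff.1 hc).1 _ (head_mem_rights c)
  rw [← gate_entry] at hrest hhead
  unfold Gate.Passes
  generalize c.gate.entry = x at hrest hhead
  induction hrest using ReflTransGen.head_induction_on with
  | refl => exact .refl
  | head hbounce _ ih =>
    obtain ⟨hbounce', hlt⟩ := bounce_of_bounce_cons hc hd hhead hbounce
    exact .head hbounce' (ih hlt)

theorem Increasing.le_of_passes (hc : c.Increasing) (hd : d.Increasing)
    (h : c.gate.Passes d.gate) : d ≤ c := by
  induction d generalizing c with
  | single b =>
    obtain rfl : c.head = b := by simpa [rights] using head_mem_rights_of_passes h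
    exact single_head_le c
  | cons b r d ih =>
    have hb : b ≤ c.head := by
      rcases List.mem_cons.1 (head_mem_rights_of_passes h) with heq | hmem
      · exact heq.ge
      · exact ((increasing_cons_iff.1 hd).1 _ hmem).le
    rcases hb.lt_or_eq with hlt | rfl
    · exact (lt_of_head_lt hlt).le
    obtain ⟨y, hforth, -⟩ := hd.exists_bounce_of_passes_cons h rfl
    cases c with
    | single x => simp [gate] at hforth
    | cons x s c =>
      rcases List.mem_cons.1 (mem_of_gate_forth_eq_some hforth).1 with rfl | hmem
      · exact cons_le_cons x r (ih (increasing_cons_iff.1 hc).2.2 (increasing_cons_iff.1 hd).2.2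
          (hc.passes_of_passes_cons hd h))
      · exact (cons_lt_cons_of_gt ((increasing_cons_iff.1 hc).2.1 r hmem) d c).le

end Gate

end CrossingSeq

/-- For every `k ≥ 2` and `ℓ ≥ 0` there exists a direction-determinate 2DFA with state set
`Q = Q⁺ ∪ Q⁻` where `|Q⁺| = k` and `|Q⁻| = ℓ` (modelled as `Fin k ⊕ Fin ℓ`, with
`Q⁺` the `inl`-states and `Q⁻` the `inr`-states: every transition moving right enters an
`inl`-state and every transition moving left enters an `inr`-state), accepting at least one
string, such that the length of the shortest string it accepts is exactly
`C(k+ℓ, ℓ+1) − 1`. -/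
theorem exists_direction_determinate_2dfa_shortest_eq (k ℓ : ℕ) (hk : 2 ≤ k) :
    ∃ (α : Type) (_ : Fintype α) (A : TwoDFA α (Fin k ⊕ Fin ℓ)),
      (∀ q s r d, A.δ q s = some (r, d) →
        ((d = true → ∃ x, r = Sum.inl x) ∧ (d = false → ∃ x, r = Sum.inr x))) ∧
      (∃ w, A.Accepts w ∧ w.length = (k + ℓ).choose (ℓ + 1) - 1) ∧
      (∀ w, A.Accepts w → (k + ℓ).choose (ℓ + 1) - 1 ≤ w.length) := by
  obtain ⟨M, hM⟩ := Nat.exists_eq_add_one.2 (Nat.choose_pos (show ℓ + 1 ≤ k + ℓ by lia))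
  obtain ⟨c, hmono, hc⟩ := CrossingSeq.exists_strictMono_increasing
    (κ := Fin k) (ρ := Fin ℓ) (M := M) (by simpa using hM.symm)
  rw [hM, Nat.add_sub_cancel]
  refine ⟨Fin M, inferInstance, Gate.automaton fun i => (c i).gate,
    fun _ _ _ _ => Gate.automaton_directionDeterminate, ?_, fun w hw => ?_⟩
  · have hself (i) : (c i).gate.Passes (c i).gate := (hc i).passes_self
    exact ⟨List.finRange M, Gate.accepts_finRange hself, List.length_finRange⟩
  · have hle (i j) (h : (c i).gate.Passes (c j).gate) : j ≤ i :=
      hmono.le_iff_le.1 ((hc i).le_of_passes (hc j) h)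
    exact Gate.le_length_of_accepts hle hw
end

section
/- For every n ≥ 2, there exists a direction-determinate two-way deterministic finite automaton with n states which accepts at least one string, and such that the length of the shortest string it accepts is exactly C(n, ⌊n/2⌋) − 1, where C denotes the binomial coefficient. -/
/-- A 2DFA is direction-determinate if its state set splits as `Q = Q⁺ ∪ Q⁻`
(here given by the indicator `f : σ → Bool`, with `Q⁺ = f⁻¹(true)` and `Q⁻ = f⁻¹(false)`)
so that every transition moving right enters a state of `Q⁺` and every transition
moving left enters a state of `Q⁻`. -/
def TwoDFA.DirectionDeterminate {α σ : Type} (A : TwoDFA α σ) : Prop :=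
  ∃ f : σ → Bool, ∀ q s r d, A.δ q s = some (r, d) → f r = d

/-!
In a direction-determinate automaton with injective transitions, the states in which an accepting
computation crosses a boundary between two cells form a *profile*: states `x₀ < … < x_k` crossing
rightwards and one fewer state `y₀ < … < y_{k-1}` crossing leftwards. Complementing the leftward
states shows that `p` rightward and `q` leftward states give `C(p + q, q + 1)` profiles. List them
in the decreasing lexicographic order of their alternating chains `x₀, y₀, x₁, y₁, …, x_k`, where
the `yᵢ` are compared in reverse, and let the `i`-th letter link the `i`-th profile to the next one:
if that profile has the chain `x₀, y₀, …, x_k` and the next one `x'₀, y'₀, …, x'_l`, the letter maps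
`xᵢ₊₁` to `yᵢ`, `y'ᵢ` to `x'ᵢ` and `x₀` to `x'_l`. The word of all letters in order is accepted.

Conversely, the boundary profiles `S` and `T` around an occurrence of the `i`-th letter in any
accepting computation are contained in the two profiles that it links and are closed under the
matchings `xᵢ₊₁ ↔ yᵢ` and `y'ᵢ ↔ x'ᵢ`, so their chains arise by deleting blocks. Such a deletion
moves `S` forward and `T` backward in the list, hence each letter raises the index of the boundary
profile by at most one, while an accepting computation begins with the first profile of the list
and ends with the last one.
-/

section Relations

variable {X Y : Type*}

theorem reflTransGen_of_leftUnique_of_finite {r : X → X → Prop} (hr : Relator.LeftUnique r)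
    {G : Set X} (hG : G.Finite) {a b : X} (ha : a ∈ G) (hsource : ∀ c, ¬ r c a)
    (hnext : ∀ c ∈ G, c ≠ b → ∃ c' ∈ G, r c c') : Relation.ReflTransGen r a b := by
  by_contra hab
  let R := {c ∈ G | Relation.ReflTransGen r a c}
  have hR : ∀ c : R, ∃ c' : R, r c c' := by
    rintro ⟨c, hcG, hac⟩
    obtain ⟨c', hc'G, hcc'⟩ := hnext c hcG (by rintro rfl; exact hab hac)
    exact ⟨⟨c', hc'G, hac.tail hcc'⟩, hcc'⟩
  choose next hrnext using hR
  have : Finite R := hG.subset (Set.sep_subset _ _)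
  have hinj : Function.Injective next := fun c d hcd =>
    Subtype.ext (hr (hrnext c) (hcd ▸ hrnext d))
  obtain ⟨c, hc⟩ := Finite.surjective_of_injective hinj ⟨a, ha, .refl⟩
  exact hsource c (by simpa [hc] using hrnext c)

theorem exists_step_of_reflTransGen {r : X → X → Prop} (hr : Relator.RightUnique r) {a b c : X}
    (hab : Relation.ReflTransGen r a b) (hb : ∀ d, ¬ r b d) (hac : Relation.ReflTransGen r a c)
    (hcb : c ≠ b) : ∃ c', r c c' := by
  rcases Relation.ReflTransGen.total_of_right_unique hr hab hac with hbc | hcb'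
  · obtain rfl | ⟨d, hbd, -⟩ := hbc.cases_head
    · exact absurd rfl hcb
    · exact absurd hbd (hb d)
  · obtain rfl | ⟨d, hcd, -⟩ := hcb'.cases_head
    · exact absurd rfl hcb
    · exact ⟨d, hcd⟩

open Classical in
/-- The partial function whose graph is a right-unique relation; it is chosen to be undefined
exactly where the relation has no value. -/
noncomputable def optionOfRel (R : X → Y → Prop) (x : X) : Option Y :=
  if h : ∃ y, R x y then some h.choose else none

theorem optionOfRel_eq_some_iff {R : X → Y → Prop} (hR : Relator.RightUnique R) {x : X} {y : Y} :
    optionOfRel R x = some y ↔ R x y := by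
  unfold optionOfRel
  split_ifs with h
  · rw [Option.some_inj]
    exact ⟨fun hy => hy ▸ h.choose_spec, fun hy => hR h.choose_spec hy⟩
  · exact ⟨nofun, fun hy => absurd ⟨y, hy⟩ h⟩

/-- The partial bijection whose graph is a given bi-unique relation. -/
noncomputable def pequivOfBiUnique (R : X → Y → Prop) (hR : Relator.BiUnique R) : X ≃. Y where
  toFun := optionOfRel R
  invFun := optionOfRel (Function.swap R)
  inv x y := by
    have hswap : Relator.RightUnique (Function.swap R) := fun _ _ _ h h' => hR.1 h h'
    rw [optionOfRel_eq_some_iff hR.2, optionOfRel_eq_some_iff hswap, Function.swap]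

theorem mem_pequivOfBiUnique {R : X → Y → Prop} {hR : Relator.BiUnique R} {x : X} {y : Y} :
    y ∈ pequivOfBiUnique R hR x ↔ R x y :=
  optionOfRel_eq_some_iff hR.2

end Relations

section Lists

variable {ι γ : Type*}

/-- The list alternating between the entries of the two arguments, starting with the first one;
when one list runs out, the rest of the other one follows. -/
def interleave : List γ → List γ → List γ
  | [], ys => ys
  | x :: xs, ys => x :: interleave ys xs
termination_by xs ys => xs.length + ys.length

theorem mem_interleave {a : γ} (xs ys : List γ) : a ∈ interleave xs ys ↔ a ∈ xs ∨ a ∈ ys := by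
  fun_induction interleave xs ys with
  | case1 ys => simp
  | case2 x xs ys ih => simp [ih, or_assoc, or_comm (a := a ∈ ys)]

theorem interleave_cons_map_map (a : γ) (f g : ι → γ) (zs : List ι) :
    interleave (a :: zs.map g) (zs.map f) = a :: zs.flatMap fun z => [f z, g z] := by
  induction zs generalizing a with
  | nil => simp [interleave]
  | cons z zs ih => simp [interleave, ← ih]

theorem interleave_map_append_map (u : γ) (f g : ι → γ) (zs : List ι) :
    interleave (zs.map f ++ [u]) (zs.map g) = (zs.flatMap fun z => [f z, g z]) ++ [u] := by
  induction zs with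
  | nil => simp [interleave]
  | cons z zs ih => simp [interleave, ih]

theorem eq_of_pairwise_lt [Preorder γ] {f : ι → γ} {zs : List ι} (h : zs.Pairwise (f · < f ·))
    {z z' : ι} (hz : z ∈ zs) (hz' : z' ∈ zs) (heq : f z = f z') : z = z' :=
  List.inj_on_of_nodup_map (List.pairwise_map.mpr (h.imp ne_of_lt)) hz hz' heq

variable [LinearOrder γ] {f g : ι → γ} {zs zs' : List ι}

theorem flatMap_le_flatMap_of_sublist (h : zs'.Sublist zs) (hf : zs.Pairwise (f · > f ·)) :
    (zs'.flatMap fun z => [f z, g z]) ≤ zs.flatMap fun z => [f z, g z] := by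
  induction h with
  | slnil => simp
  | @cons zs' zs z h ih =>
    rw [List.pairwise_cons] at hf
    cases zs' with
    | nil => exact le_of_lt (List.nil_lt_cons _ _)
    | cons z' zs' =>
      exact le_of_lt (List.cons_lt_cons_iff.mpr (.inl (hf.1 z' (h.subset List.mem_cons_self))))
  | cons_cons z _ ih =>
    rw [List.pairwise_cons] at hf
    exact List.cons_le_cons _ (List.cons_le_cons _ (ih hf.2))

theorem flatMap_append_le_flatMap_append_of_sublist {u : γ} (h : zs'.Sublist zs)
    (hf : zs.Pairwise (f · < f ·)) (hu : ∀ z ∈ zs, f z < u) :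
    (zs.flatMap fun z => [f z, g z]) ++ [u] ≤ (zs'.flatMap fun z => [f z, g z]) ++ [u] := by
  induction h with
  | slnil => simp
  | @cons zs' zs z h ih =>
    rw [List.pairwise_cons] at hf
    cases zs' with
    | nil => exact le_of_lt (List.cons_lt_cons_iff.mpr (.inl (hu z List.mem_cons_self)))
    | cons z' zs' =>
      exact le_of_lt (List.cons_lt_cons_iff.mpr (.inl (hf.1 z' (h.subset List.mem_cons_self))))
  | cons_cons z _ ih =>
    rw [List.pairwise_cons] at hf
    exact List.cons_le_cons _ (List.cons_le_cons _
      (ih hf.2 fun z' hz' => hu z' (List.mem_cons_of_mem _ hz')))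

end Lists

theorem sort_eq_filter_sort_of_subset {γ : Type*} [LinearOrder γ] {A B : Finset γ} (h : A ⊆ B) :
    A.sort = B.sort.filter (· ∈ A) := by
  refine List.Perm.eq_of_pairwise (le := (· ≤ ·)) (fun _ _ _ _ => le_antisymm)
    (A.pairwise_sort _) ((B.pairwise_sort _).filter _) ?_
  refine (List.perm_ext_iff_of_nodup (A.sort_nodup _) ((B.sort_nodup _).filter _)).mpr ?_
  simpa using fun a ha => h ha

section Transfers

variable {α β : Type*}

/-- The states in which a head enters a tape cell, when `S` and `T` are the sets of states in
which it crosses the left and the right boundary of the cell. The states in `α` move right and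
those in `β` move left. -/
def entering (S T : Finset (α ⊕ β)) : Finset (α ⊕ β) :=
  S.toLeft.disjSum T.toRight

/-- The states in which a head leaves a tape cell, when `S` and `T` are the sets of states in
which it crosses the left and the right boundary of the cell. -/
def leaving (S T : Finset (α ⊕ β)) : Finset (α ⊕ β) :=
  T.toLeft.disjSum S.toRight

/-- A set `S` of states crossing the left boundary of a tape cell and a set `T` crossing its right
boundary are compatible with the partial bijection `f` by which the letter in the cell acts on
the states. -/
structure Transfers (f : α ⊕ β ≃. α ⊕ β) (S T : Finset (α ⊕ β)) : Prop where
  exists_leaving : ∀ q ∈ entering S T, ∃ r ∈ leaving S T, r ∈ f q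
  exists_entering : ∀ r ∈ leaving S T, ∃ q ∈ entering S T, r ∈ f q

namespace Transfers

variable {f : α ⊕ β ≃. α ⊕ β} {S T : Finset (α ⊕ β)}

theorem mem_entering_iff (h : Transfers f S T) {q r : α ⊕ β} (hr : r ∈ f q) :
    q ∈ entering S T ↔ r ∈ leaving S T := by
  constructor
  · intro hq
    obtain ⟨r', hr', hqr'⟩ := h.exists_leaving q hq
    exact Option.mem_unique hr hqr' ▸ hr'
  · intro hr'
    obtain ⟨q', hq', hq'r⟩ := h.exists_entering r hr'
    exact f.inj hr hq'r ▸ hq'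

theorem card_entering_eq (h : Transfers f S T) : (entering S T).card = (leaving S T).card :=
  le_antisymm
    (Finset.card_le_card_of_forall_subsingleton (fun q r => r ∈ f q) h.exists_leaving
      fun _ _ _ hq _ hq' => f.inj hq.2 hq'.2)
    (Finset.card_le_card_of_forall_subsingleton' (fun q r => r ∈ f q) h.exists_entering
      fun _ _ _ hr _ hr' => Option.mem_unique hr.2 hr'.2)

theorem balanced (h : Transfers f S T) (hS : S.toLeft.card = S.toRight.card + 1) :
    T.toLeft.card = T.toRight.card + 1 := by
  have := h.card_entering_eq
  simp only [entering, leaving, Finset.card_disjSum] at this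
  lia

end Transfers

end Transfers

section Tape

variable {Λ σ : Type}

theorem tapeSym_eq_some_iff {w : List Λ} {i : ℤ} {s : TapeSymbol Λ} :
    tapeSym w i = some s ↔ (i = 0 ∧ s = .lend) ∨ (i = w.length + 1 ∧ s = .rend) ∨
      ∃ (j : ℕ) (_ : j < w.length), i = j + 1 ∧ s = .letter w[j] := by
  unfold tapeSym
  split_ifs with h0 hend hpos
  · grind
  · grind
  · obtain ⟨j, rfl⟩ : ∃ j : ℕ, i = j + 1 := ⟨(i - 1).toNat, by lia⟩
    grind
  · grind

namespace TwoDFA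

theorem rightUnique_step (A : TwoDFA Λ σ) (w : List Λ) : Relator.RightUnique (A.Step w) := by
  rintro c _ _ ⟨s, hs, r, d, hδ, rfl⟩ ⟨s', hs', r', d', hδ', rfl⟩
  obtain rfl : s = s' := by simpa [hs] using hs'
  obtain ⟨rfl, rfl⟩ : r = r' ∧ d = d' := by simpa [hδ] using hδ'
  rfl

end TwoDFA

end Tape

namespace TwoDFA

variable {Λ α β : Type}

/-- The two-way automaton whose letters act by partial bijections of its states. States in `α` are
entered by moving right and states in `β` by moving left; `⊢` only sends the head back into the
tape, and `⊣` always halts. -/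
def reversible (τ : Λ → (α ⊕ β ≃. α ⊕ β)) (start goal : α) : TwoDFA Λ (α ⊕ β) where
  init := .inl start
  δ
    | .inl x, .lend => some (.inl x, true)
    | .inr _, .lend => none
    | _, .rend => none
    | q, .letter a => (τ a q).map fun r => (r, r.isLeft)
  F := {.inl goal}

variable {τ : Λ → (α ⊕ β ≃. α ⊕ β)} {start goal : α} {w : List Λ}

theorem directionDeterminate_reversible (τ : Λ → (α ⊕ β ≃. α ⊕ β)) (start goal : α) :
    (reversible τ start goal).DirectionDeterminate := by
  refine ⟨Sum.isLeft, fun q s r d h => ?_⟩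
  match q, s with
  | .inl x, .lend =>
    obtain ⟨rfl, rfl⟩ : .inl x = r ∧ true = d := by simpa [reversible] using h
    rfl
  | .inr y, .lend => simp [reversible] at h
  | .inl x, .rend | .inr y, .rend => simp [reversible] at h
  | .inl x, .letter a | .inr y, .letter a =>
    simp only [reversible, Option.map_eq_some_iff, Prod.mk.injEq] at h
    obtain ⟨_, -, rfl, hd⟩ := h
    exact hd

theorem step_reversible_iff {c c' : (α ⊕ β) × ℤ} :
    (reversible τ start goal).Step w c c' ↔
      (∃ x, c = (.inl x, 0) ∧ c' = (.inl x, 1)) ∨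
      ∃ (j : ℕ) (_ : j < w.length) (q r : α ⊕ β), r ∈ τ w[j] q ∧
        c = (q, (j : ℤ) + 1) ∧ c' = (r, (j : ℤ) + 1 + if r.isLeft then 1 else -1) := by
  obtain ⟨q, i⟩ := c
  constructor
  · rintro ⟨s, hs, r, d, hδ, rfl⟩
    obtain ⟨rfl, rfl⟩ | ⟨rfl, rfl⟩ | ⟨j, hj, rfl, rfl⟩ := tapeSym_eq_some_iff.mp hs
    · rcases q with x | y
      · obtain ⟨rfl, rfl⟩ : .inl x = r ∧ true = d := by simpa [reversible] using hδ
        exact .inl ⟨x, rfl, rfl⟩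
      · simp [reversible] at hδ
    · simp [reversible] at hδ
    · simp only [reversible, Option.map_eq_some_iff, Prod.mk.injEq] at hδ
      obtain ⟨r, hr, rfl, rfl⟩ := hδ
      exact .inr ⟨j, hj, q, r, hr, rfl, rfl⟩
  · rintro (⟨x, ⟨⟩, rfl⟩ | ⟨j, hj, q, r, hr, ⟨⟩, rfl⟩)
    · exact ⟨_, tapeSym_eq_some_iff.mpr (.inl ⟨rfl, rfl⟩), .inl x, true, rfl, rfl⟩
    · refine ⟨_, tapeSym_eq_some_iff.mpr (.inr (.inr ⟨j, hj, rfl, rfl⟩)), r, r.isLeft, ?_, rfl⟩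
      rw [Option.mem_def] at hr
      simp [reversible, hr]

theorem leftUnique_step_reversible :
    Relator.LeftUnique ((reversible τ start goal).Step w) := by
  intro c₁ c₂ c' h₁ h₂
  rw [step_reversible_iff] at h₁ h₂
  rcases h₁ with ⟨x₁, rfl, rfl⟩ | ⟨j₁, hj₁, q₁, r₁, hr₁, rfl, rfl⟩ <;>
  rcases h₂ with ⟨x₂, rfl, h⟩ | ⟨j₂, hj₂, q₂, r₂, hr₂, rfl, h⟩
  · grind
  · grind
  · grind
  · rw [Prod.mk.injEq] at h
    obtain ⟨rfl, h⟩ := h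
    obtain rfl : j₁ = j₂ := by lia
    rw [(τ w[j₁]).inj hr₁ hr₂]

theorem not_step_reversible_to_lend (c : (α ⊕ β) × ℤ) (x : α) :
    ¬ (reversible τ start goal).Step w c (.inl x, 0) := by
  rw [step_reversible_iff]
  rintro (⟨x, -, h⟩ | ⟨j, -, q, r, -, -, h⟩) <;> grind

theorem not_step_reversible_of_length_lt {q : α ⊕ β} {i : ℤ} (hi : w.length < i)
    (c : (α ⊕ β) × ℤ) : ¬ (reversible τ start goal).Step w (q, i) c := by
  rw [step_reversible_iff]
  rintro (⟨x, h, -⟩ | ⟨j, hj, q, r, -, h, -⟩) <;> grind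

theorem accepts_reversible_iff : (reversible τ start goal).Accepts w ↔
    Relation.ReflTransGen ((reversible τ start goal).Step w) (.inl start, 0)
      (.inl goal, (w.length : ℤ) + 1) := by
  simp [Accepts, reversible]

theorem exists_step_of_accepts_reversible (h : (reversible τ start goal).Accepts w)
    {c : (α ⊕ β) × ℤ}
    (hc : Relation.ReflTransGen ((reversible τ start goal).Step w) (.inl start, 0) c)
    (hne : c ≠ (.inl goal, (w.length : ℤ) + 1)) :
    ∃ c', (reversible τ start goal).Step w c c' :=
  exists_step_of_reflTransGen (rightUnique_step _ w) (accepts_reversible_iff.mp h)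
    (not_step_reversible_of_length_lt (by lia)) hc hne

/-- The configuration that a head enters by crossing, in a given state, the boundary between the
tape positions `j` and `j + 1`. -/
def crossing (j : ℕ) : α ⊕ β → (α ⊕ β) × ℤ
  | .inl x => (.inl x, j + 1)
  | .inr y => (.inr y, j)

theorem exists_crossing_eq_of_mem_leaving {S : ℕ → Finset (α ⊕ β)} {j : ℕ} {r : α ⊕ β}
    (hr : r ∈ leaving (S j) (S (j + 1))) :
    ∃ i ≤ j + 1, r ∈ S i ∧ crossing i r = (r, (j : ℤ) + 1 + if r.isLeft then 1 else -1) := by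
  rcases r with x | y
  · exact ⟨j + 1, le_rfl, by simpa [leaving] using hr, by simp [crossing]⟩
  · exact ⟨j, j.le_succ, by simpa [leaving] using hr, by simp [crossing]⟩

theorem accepts_reversible_of_transfers {S : ℕ → Finset (α ⊕ β)} (hfirst : S 0 = {.inl start})
    (hlast : S w.length = {.inl goal})
    (h : ∀ j (_ : j < w.length), Transfers (τ w[j]) (S j) (S (j + 1))) :
    (reversible τ start goal).Accepts w := by
  rw [accepts_reversible_iff]
  let G : Set ((α ⊕ β) × ℤ) := {(.inl start, 0)} ∪ ⋃ j ∈ Set.Iic w.length, crossing j '' S j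
  have mem_G {j : ℕ} (hj : j ≤ w.length) {q : α ⊕ β} (hq : q ∈ S j) : crossing j q ∈ G :=
    .inr (Set.mem_biUnion (Set.mem_Iic.mpr hj) ⟨q, hq, rfl⟩)
  have exists_step {j : ℕ} (hj : j < w.length) {q : α ⊕ β}
      (hq : q ∈ entering (S j) (S (j + 1))) :
      ∃ c' ∈ G, (reversible τ start goal).Step w (q, (j : ℤ) + 1) c' := by
    obtain ⟨r, hr, hqr⟩ := (h j hj).exists_leaving q hq
    obtain ⟨i, hij, hri, hi⟩ := exists_crossing_eq_of_mem_leaving hr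
    exact ⟨_, mem_G (hij.trans hj) hri,
      step_reversible_iff.mpr (.inr ⟨j, hj, q, r, hqr, rfl, hi⟩)⟩
  refine reflTransGen_of_leftUnique_of_finite leftUnique_step_reversible (G := G) ?_ (.inl rfl)
    (fun c => not_step_reversible_to_lend c start) ?_
  · exact (Set.finite_singleton _).union
      ((Set.finite_Iic _).biUnion fun j _ => (S j).finite_toSet.image _)
  · rintro c (rfl | hc) hne
    · exact ⟨crossing 0 (.inl start), mem_G (Nat.zero_le _) (by simp [hfirst]),
        step_reversible_iff.mpr (.inl ⟨start, rfl, rfl⟩)⟩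
    obtain ⟨j, hj, x | y, hq, rfl⟩ : ∃ j ≤ w.length, ∃ q ∈ S j, crossing j q = c := by
      simpa using hc
    · have hjlt : j < w.length := by
        refine lt_of_le_of_ne hj ?_
        rintro rfl
        obtain rfl : x = goal := by simpa [hlast] using hq
        exact hne rfl
      exact exists_step hjlt (by simpa [entering] using hq)
    · obtain _ | i := j
      · simp [hfirst] at hq
      · exact_mod_cast exists_step hj (q := .inr y) (by simpa [entering] using hq)

section CrossingSet

variable [Fintype α] [Fintype β]

open Classical in
/-- The states in which a computation crosses the boundary between the positions `j` and `j + 1`,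
for an automaton that enters the states in `α` by moving right and those in `β` by moving left. -/
noncomputable def crossingSet (A : TwoDFA Λ (α ⊕ β)) (w : List Λ) (j : ℕ) : Finset (α ⊕ β) :=
  {q | Relation.ReflTransGen (A.Step w) (A.init, 0) (crossing j q)}

variable {A : TwoDFA Λ (α ⊕ β)} {j : ℕ}

theorem mem_crossingSet {q : α ⊕ β} : q ∈ A.crossingSet w j ↔
    Relation.ReflTransGen (A.Step w) (A.init, 0) (crossing j q) := by
  simp [crossingSet]

theorem mem_entering_crossingSet {q : α ⊕ β} :
    q ∈ entering (A.crossingSet w j) (A.crossingSet w (j + 1)) ↔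
      Relation.ReflTransGen (A.Step w) (A.init, 0) (q, (j : ℤ) + 1) := by
  rcases q with x | y <;> simp [entering, mem_crossingSet, crossing]

theorem mem_leaving_crossingSet {r : α ⊕ β} :
    r ∈ leaving (A.crossingSet w j) (A.crossingSet w (j + 1)) ↔
      Relation.ReflTransGen (A.Step w) (A.init, 0)
        (r, (j : ℤ) + 1 + if r.isLeft then 1 else -1) := by
  rcases r with x | y <;> simp [leaving, mem_crossingSet, crossing]

theorem crossingSet_reversible_zero (h : (reversible τ start goal).Accepts w) :
    (reversible τ start goal).crossingSet w 0 = {.inl start} := by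
  ext (x | y)
  · simp only [mem_crossingSet, crossing, Finset.mem_singleton]
    constructor
    · intro hx
      obtain hx | ⟨c, hc, hstep⟩ := hx.cases_tail
      · grind
      obtain ⟨x, rfl, h⟩ | ⟨j, -, q, r, -, -, h⟩ := step_reversible_iff.mp hstep
      · obtain hc | ⟨c', -, hstep'⟩ := hc.cases_tail
        · grind [reversible]
        · exact absurd hstep' (not_step_reversible_to_lend _ _)
      · grind
    · rintro ⟨⟩
      exact .single (step_reversible_iff.mpr (.inl ⟨start, rfl, rfl⟩))
  · simp only [mem_crossingSet, crossing, Finset.mem_singleton, reduceCtorEq, iff_false]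
    intro hy
    obtain ⟨c, hstep⟩ := exists_step_of_accepts_reversible h hy (by simp)
    obtain ⟨x, h, -⟩ | ⟨j, -, q, r, -, h, -⟩ := step_reversible_iff.mp hstep <;> grind

theorem crossingSet_reversible_length (h : (reversible τ start goal).Accepts w) :
    (reversible τ start goal).crossingSet w w.length = {.inl goal} := by
  ext (x | y)
  · simp only [mem_crossingSet, crossing, Finset.mem_singleton]
    constructor
    · intro hx
      by_contra hne
      obtain ⟨c, hstep⟩ := exists_step_of_accepts_reversible h hx (by simpa using hne)
      exact not_step_reversible_of_length_lt (by lia) c hstep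
    · rintro ⟨⟩
      exact accepts_reversible_iff.mp h
  · simp only [mem_crossingSet, crossing, Finset.mem_singleton, reduceCtorEq, iff_false]
    intro hy
    obtain hy | ⟨c, -, hstep⟩ := hy.cases_tail
    · simp [reversible] at hy
    · obtain ⟨x, -, h⟩ | ⟨j, hj, q, r, -, -, h⟩ := step_reversible_iff.mp hstep <;> grind

theorem transfers_crossingSet_reversible (h : (reversible τ start goal).Accepts w)
    (hj : j < w.length) :
    Transfers (τ w[j]) ((reversible τ start goal).crossingSet w j)
      ((reversible τ start goal).crossingSet w (j + 1)) where
  exists_leaving q hq := by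
    rw [mem_entering_crossingSet] at hq
    obtain ⟨c, hstep⟩ := exists_step_of_accepts_reversible h hq (by grind)
    obtain ⟨x, h, -⟩ | ⟨i, hi, q', r, hr, h, rfl⟩ := step_reversible_iff.mp hstep
    · grind
    · obtain ⟨rfl, rfl⟩ : q = q' ∧ j = i := by simpa using h
      exact ⟨r, mem_leaving_crossingSet.mpr (hq.tail hstep), hr⟩
  exists_entering r hr := by
    rw [mem_leaving_crossingSet] at hr
    obtain hr | ⟨c, hc, hstep⟩ := hr.cases_tail
    · rcases r with x | y <;> grind [reversible]
    obtain ⟨x, -, h⟩ | ⟨i, hi, q, r', hq, rfl, h⟩ := step_reversible_iff.mp hstep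
    · grind
    · obtain ⟨rfl, rfl⟩ : r = r' ∧ j = i := by grind
      exact ⟨q, mem_entering_crossingSet.mpr hc, hq⟩

end CrossingSet

theorem accepts_reversible_iff_exists_transfers [Finite α] [Finite β] :
    (reversible τ start goal).Accepts w ↔
      ∃ S : ℕ → Finset (α ⊕ β), S 0 = {.inl start} ∧ S w.length = {.inl goal} ∧
        ∀ j (_ : j < w.length), Transfers (τ w[j]) (S j) (S (j + 1)) := by
  have := Fintype.ofFinite α
  have := Fintype.ofFinite β
  exact ⟨fun h => ⟨_, crossingSet_reversible_zero h, crossingSet_reversible_length h,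
    fun _ => transfers_crossingSet_reversible h⟩,
    fun ⟨_, hfirst, hlast, h⟩ => accepts_reversible_of_transfers hfirst hlast h⟩

end TwoDFA
/-- The finite sets of states that can be the crossing set of an accepting computation: since the
head starts on the left of the boundary and ends on the right of it, it crosses the boundary
rightwards once more than leftwards. -/
def Profile (α β : Type*) : Type _ :=
  {S : Finset (α ⊕ β) // S.toLeft.card = S.toRight.card + 1}

namespace Profile

variable {α β : Type*}

section Card

variable [Fintype α] [Fintype β]

instance : Fintype (Profile α β) :=
  inferInstanceAs (Fintype {S : Finset (α ⊕ β) // S.toLeft.card = S.toRight.card + 1})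

/-- Complementing the leftward crossings turns profiles into the sets of states of a fixed size. -/
def equivFinsetCard [DecidableEq β] :
    Profile α β ≃ {S : Finset (α ⊕ β) // S.card = Fintype.card β + 1} where
  toFun S := ⟨S.1.toLeft.disjSum S.1.toRightᶜ, by
    have := Finset.card_le_univ S.1.toRight
    rw [Finset.card_disjSum, Finset.card_compl, S.2]
    lia⟩
  invFun S := ⟨S.1.toLeft.disjSum S.1.toRightᶜ, by
    have hS := S.1.card_toLeft_add_card_toRight
    have := Finset.card_le_univ S.1.toRight
    rw [Finset.toLeft_disjSum, Finset.toRight_disjSum, Finset.card_compl]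
    lia⟩
  left_inv S := Subtype.ext <| by simp [Finset.toLeft_disjSum_toRight]
  right_inv S := Subtype.ext <| by simp [Finset.toLeft_disjSum_toRight]

theorem card_eq_choose : Fintype.card (Profile α β) =
    (Fintype.card α + Fintype.card β).choose (Fintype.card β + 1) := by
  classical
  rw [Fintype.card_congr equivFinsetCard, Fintype.card_finset_len, Fintype.card_sum]

end Card

section Left

variable [LinearOrder α] (S : Profile α β)

/-- The states of a profile that cross the boundary rightwards, in increasing order. -/
def left : List α := S.1.toLeft.sort

theorem mem_left {x : α} : x ∈ S.left ↔ .inl x ∈ S.1 := by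
  simp [left]

theorem pairwise_left : S.left.Pairwise (· < ·) :=
  S.1.toLeft.sortedLT_sort.pairwise

end Left

section Right

variable [LinearOrder β] (S : Profile α β)

/-- The states of a profile that cross the boundary leftwards, in increasing order. -/
def right : List β := S.1.toRight.sort

theorem mem_right {y : β} : y ∈ S.right ↔ .inr y ∈ S.1 := by
  simp [right]

theorem pairwise_right : S.right.Pairwise (· < ·) :=
  S.1.toRight.sortedLT_sort.pairwise

end Right

variable [LinearOrder α] [LinearOrder β] (S : Profile α β)

theorem length_left : S.left.length = S.right.length + 1 := by
  simpa [left, right] using S.2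

theorem left_ne_nil : S.left ≠ [] :=
  List.ne_nil_of_length_eq_add_one S.length_left

/-- The smallest state of a profile that crosses the boundary rightwards. -/
def first : α := S.left.head S.left_ne_nil

/-- The largest state of a profile that crosses the boundary rightwards. -/
def last : α := S.left.getLast S.left_ne_nil

/-- The pairs `(yᵢ, xᵢ₊₁)` of a profile with rightward states `x₀ < … < x_k` and leftward states
`y₀ < … < y_{k-1}`. -/
def backPairs : List (β × α) := S.right.zip S.left.tail

/-- The pairs `(xᵢ, yᵢ)` of a profile with rightward states `x₀ < … < x_k` and leftward states
`y₀ < … < y_{k-1}`. -/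
def forthPairs : List (α × β) := S.left.dropLast.zip S.right

theorem map_fst_backPairs : S.backPairs.map Prod.fst = S.right :=
  List.map_fst_zip (by simp [S.length_left])

theorem map_snd_forthPairs : S.forthPairs.map Prod.snd = S.right :=
  List.map_snd_zip (by simp [S.length_left])

theorem first_cons_map_snd_backPairs : S.first :: S.backPairs.map Prod.snd = S.left := by
  rw [backPairs, List.map_snd_zip (by simp [S.length_left])]
  exact List.cons_head_tail S.left_ne_nil

theorem map_fst_forthPairs_append_last : S.forthPairs.map Prod.fst ++ [S.last] = S.left := by
  rw [forthPairs, List.map_fst_zip (by simp [S.length_left])]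
  exact List.dropLast_concat_getLast S.left_ne_nil

/-- The alternating list `x₀, y₀, x₁, y₁, …, x_k` of a profile with rightward states
`x₀ < … < x_k` and leftward states `y₀ < … < y_{k-1}`. The order on `β` is reversed so that
truncating a chain and deleting blocks `yᵢ, xᵢ₊₁` both make it lexicographically smaller; the
states in `α` and in `β` sit at positions of different parity and are never compared. -/
def chain : List (α ⊕ₗ βᵒᵈ) :=
  interleave (S.left.map Sum.inlₗ) (S.right.map (Sum.inrₗ ∘ OrderDual.toDual))

variable {S}

theorem chain_of_left_eq_cons {x : α} {zs : List (β × α)}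
    (hleft : S.left = x :: zs.map Prod.snd) (hright : S.right = zs.map Prod.fst) :
    S.chain = Sum.inlₗ x ::
      zs.flatMap fun z => [Sum.inrₗ (OrderDual.toDual z.1), Sum.inlₗ z.2] := by
  rw [chain, hleft, hright, List.map_cons, List.map_map, List.map_map]
  exact interleave_cons_map_map _ _ _ _

theorem chain_of_left_eq_append {x : α} {zs : List (α × β)}
    (hleft : S.left = zs.map Prod.fst ++ [x]) (hright : S.right = zs.map Prod.snd) :
    S.chain =
      (zs.flatMap fun z => [Sum.inlₗ z.1, Sum.inrₗ (OrderDual.toDual z.2)]) ++ [Sum.inlₗ x] := by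
  rw [chain, hleft, hright, List.map_append, List.map_map, List.map_map]
  exact interleave_map_append_map _ _ _ _

theorem chain_injective : Function.Injective (chain (α := α) (β := β)) := by
  intro S T h
  have hmem (q : α ⊕ₗ βᵒᵈ) : q ∈ S.chain ↔ q ∈ T.chain := by rw [h]
  simp only [chain, mem_interleave] at hmem
  refine Subtype.ext (Finset.ext fun q => ?_)
  rcases q with x | y
  · simpa [mem_left] using hmem (Sum.inlₗ x)
  · simpa [mem_right] using hmem (Sum.inrₗ (OrderDual.toDual y))

/-- Profiles are ordered by decreasing chains, so that they increase along an accepting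
computation. -/
noncomputable instance : LinearOrder (Profile α β) :=
  LinearOrder.lift' (OrderDual.toDual ∘ chain) (OrderDual.toDual.injective.comp chain_injective)

variable {T : Profile α β}

theorem le_iff_chain_le : S ≤ T ↔ T.chain ≤ S.chain := Iff.rfl

theorem left_eq_filter (h : T.1 ⊆ S.1) : T.left = S.left.filter fun x => .inl x ∈ T.1 := by
  simpa [left] using sort_eq_filter_sort_of_subset (Finset.toLeft_subset_toLeft h)

theorem right_eq_filter (h : T.1 ⊆ S.1) : T.right = S.right.filter fun y => .inr y ∈ T.1 := by
  simpa [right] using sort_eq_filter_sort_of_subset (Finset.toRight_subset_toRight h)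

theorem pairwise_fst_backPairs : S.backPairs.Pairwise fun z z' => z.1 < z'.1 := by
  rw [← List.pairwise_map (R := (· < ·)), map_fst_backPairs]
  exact S.pairwise_right

theorem pairwise_snd_forthPairs : S.forthPairs.Pairwise fun z z' => z.2 < z'.2 := by
  rw [← List.pairwise_map (R := (· < ·)), map_snd_forthPairs]
  exact S.pairwise_right

theorem pairwise_first_cons_backPairs : (∀ z ∈ S.backPairs, S.first < z.2) ∧
    S.backPairs.Pairwise fun z z' => z.2 < z'.2 := by
  have h := S.pairwise_left
  rwa [← first_cons_map_snd_backPairs, List.pairwise_cons, List.forall_mem_map,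
    List.pairwise_map] at h

theorem pairwise_forthPairs_append_last : (∀ z ∈ S.forthPairs, z.1 < S.last) ∧
    S.forthPairs.Pairwise fun z z' => z.1 < z'.1 := by
  have h := S.pairwise_left
  rw [← map_fst_forthPairs_append_last, List.pairwise_append, List.pairwise_map] at h
  exact ⟨fun z hz => h.2.2 _ (List.mem_map_of_mem hz) _ List.mem_cons_self, h.1⟩

theorem first_mem (S : Profile α β) : .inl S.first ∈ S.1 :=
  S.mem_left.mp (List.head_mem S.left_ne_nil)

theorem last_mem (S : Profile α β) : .inl S.last ∈ S.1 :=
  S.mem_left.mp (List.getLast_mem S.left_ne_nil)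

theorem exists_sublist_backPairs (h : T.1 ⊆ S.1)
    (hclosed : ∀ z ∈ S.backPairs, .inr z.1 ∈ T.1 ↔ .inl z.2 ∈ T.1) :
    ∃ zs : List (β × α), zs.Sublist S.backPairs ∧ T.left = S.first :: zs.map Prod.snd ∧
      T.right = zs.map Prod.fst := by
  let zs := S.backPairs.filter fun z => .inr z.1 ∈ T.1
  have hright : T.right = zs.map Prod.fst := by
    rw [right_eq_filter h, ← map_fst_backPairs, List.filter_map]; rfl
  have hleft_tail : (S.backPairs.map Prod.snd).filter (fun x => .inl x ∈ T.1) =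
      zs.map Prod.snd := by
    rw [List.filter_map]
    exact congrArg _ (List.filter_congr fun z hz => by simp [hclosed z hz])
  refine ⟨zs, List.filter_sublist, ?_, hright⟩
  have hlength := T.length_left
  rw [left_eq_filter h, ← first_cons_map_snd_backPairs, List.filter_cons, hleft_tail] at hlength ⊢
  split_ifs at hlength ⊢
  · rfl
  · simp [hright] at hlength

theorem exists_sublist_forthPairs (h : T.1 ⊆ S.1)
    (hclosed : ∀ z ∈ S.forthPairs, .inl z.1 ∈ T.1 ↔ .inr z.2 ∈ T.1) :
    ∃ zs : List (α × β), zs.Sublist S.forthPairs ∧ T.left = zs.map Prod.fst ++ [S.last] ∧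
      T.right = zs.map Prod.snd := by
  let zs := S.forthPairs.filter fun z => .inr z.2 ∈ T.1
  have hright : T.right = zs.map Prod.snd := by
    rw [right_eq_filter h, ← map_snd_forthPairs, List.filter_map]; rfl
  have hleft_init : (S.forthPairs.map Prod.fst).filter (fun x => .inl x ∈ T.1) =
      zs.map Prod.fst := by
    rw [List.filter_map]
    exact congrArg _ (List.filter_congr fun z hz => by simp [hclosed z hz])
  refine ⟨zs, List.filter_sublist, ?_, hright⟩
  have hlength := T.length_left
  rw [left_eq_filter h, ← map_fst_forthPairs_append_last, List.filter_append, hleft_init,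
    List.filter_singleton, Bool.cond_decide] at hlength ⊢
  split_ifs at hlength ⊢
  · rfl
  · simp [hright] at hlength

theorem le_of_subset_of_backPairs (h : T.1 ⊆ S.1)
    (hclosed : ∀ z ∈ S.backPairs, .inr z.1 ∈ T.1 ↔ .inl z.2 ∈ T.1) : S ≤ T := by
  obtain ⟨zs, hzs, hleft, hright⟩ := exists_sublist_backPairs h hclosed
  rw [le_iff_chain_le, chain_of_left_eq_cons hleft hright,
    chain_of_left_eq_cons S.first_cons_map_snd_backPairs.symm S.map_fst_backPairs.symm]
  exact List.cons_le_cons _ (flatMap_le_flatMap_of_sublist hzs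
    (pairwise_fst_backPairs.imp fun h =>
      Sum.Lex.inr_lt_inr_iff.mpr (OrderDual.toDual_lt_toDual.mpr h)))

theorem le_of_subset_of_forthPairs (h : T.1 ⊆ S.1)
    (hclosed : ∀ z ∈ S.forthPairs, .inl z.1 ∈ T.1 ↔ .inr z.2 ∈ T.1) : T ≤ S := by
  obtain ⟨zs, hzs, hleft, hright⟩ := exists_sublist_forthPairs h hclosed
  rw [le_iff_chain_le, chain_of_left_eq_append hleft hright,
    chain_of_left_eq_append S.map_fst_forthPairs_append_last.symm S.map_snd_forthPairs.symm]
  obtain ⟨hlast, hfst⟩ := S.pairwise_forthPairs_append_last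
  exact flatMap_append_le_flatMap_append_of_sublist hzs
    (hfst.imp fun h => Sum.Lex.inl_lt_inl_iff.mpr h)
    fun z hz => Sum.Lex.inl_lt_inl_iff.mpr (hlast z hz)

/-- The profile of a boundary that is crossed exactly once. -/
def single (x : α) : Profile α β := ⟨{.inl x}, rfl⟩

theorem le_single_first (S : Profile α β) : S ≤ single S.first := by
  refine le_of_subset_of_backPairs (by simpa [single] using S.first_mem) fun z hz => ?_
  simpa [single] using (S.pairwise_first_cons_backPairs.1 z hz).ne'

theorem single_last_le (S : Profile α β) : single S.last ≤ S := by
  refine le_of_subset_of_forthPairs (by simpa [single] using S.last_mem) fun z hz => ?_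
  simpa [single] using (S.pairwise_forthPairs_append_last.1 z hz).ne

/-- The transitions of a letter between the boundary profiles `S` and `T`: the states entering
the letter are matched with the states leaving it by `x₀ ↦ x'_l`, `xᵢ₊₁ ↦ yᵢ` and `y'ᵢ ↦ x'ᵢ`,
where `x₀, y₀, …, x_k` and `x'₀, y'₀, …, x'_l` are the chains of `S` and `T`. -/
inductive Link (S T : Profile α β) : α ⊕ β → α ⊕ β → Prop
  | cross {x x' : α} (hx : x = S.first) (hx' : x' = T.last) : Link S T (.inl x) (.inl x')
  | back {x : α} {y : β} (h : (y, x) ∈ S.backPairs) : Link S T (.inl x) (.inr y)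
  | forth {x : α} {y : β} (h : (x, y) ∈ T.forthPairs) : Link S T (.inr y) (.inl x)

theorem biUnique_link (S T : Profile α β) : Relator.BiUnique (Link S T) := by
  obtain ⟨hfirst, hsnd⟩ := S.pairwise_first_cons_backPairs
  obtain ⟨hlast, hfst⟩ := T.pairwise_forthPairs_append_last
  constructor
  · rintro q q' r (⟨rfl, rfl⟩ | h | h) (⟨rfl, h'⟩ | h' | h')
    · rfl
    · exact absurd rfl (hlast _ h').ne
    · cases eq_of_pairwise_lt S.pairwise_fst_backPairs h h' rfl; rfl
    · exact absurd h' (hlast _ h).ne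
    · cases eq_of_pairwise_lt hfst h h' rfl; rfl
  · rintro q r r' (⟨rfl, rfl⟩ | h | h) (⟨h', rfl⟩ | h' | h')
    · rfl
    · exact absurd rfl (hfirst _ h').ne
    · exact absurd h' (hfirst _ h).ne'
    · cases eq_of_pairwise_lt hsnd h h' rfl; rfl
    · cases eq_of_pairwise_lt T.pairwise_snd_forthPairs h h' rfl; rfl

/-- The partial bijection of the states by which a letter links the boundary profiles `S` and
`T`. -/
noncomputable def link (S T : Profile α β) : α ⊕ β ≃. α ⊕ β :=
  pequivOfBiUnique (Link S T) (biUnique_link S T)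

theorem mem_link {q r : α ⊕ β} : r ∈ link S T q ↔ Link S T q r :=
  mem_pequivOfBiUnique

theorem mem_entering_iff_exists_link {q : α ⊕ β} : q ∈ entering S.1 T.1 ↔ ∃ r, Link S T q r := by
  rcases q with x | y
  · rw [entering, Finset.inl_mem_disjSum, Finset.mem_toLeft, ← mem_left,
      ← first_cons_map_snd_backPairs, List.mem_cons, List.mem_map]
    constructor
    · rintro (hx | ⟨⟨y, _⟩, h, rfl⟩)
      exacts [⟨_, .cross hx rfl⟩, ⟨_, .back h⟩]
    · rintro ⟨r, ⟨hx, -⟩ | h⟩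
      exacts [.inl hx, .inr ⟨_, h, rfl⟩]
  · rw [entering, Finset.inr_mem_disjSum, Finset.mem_toRight, ← mem_right,
      ← map_snd_forthPairs, List.mem_map]
    constructor
    · rintro ⟨⟨x, _⟩, h, rfl⟩
      exact ⟨_, .forth h⟩
    · rintro ⟨r, h⟩
      cases h with | forth h => exact ⟨_, h, rfl⟩

theorem mem_leaving_iff_exists_link {r : α ⊕ β} : r ∈ leaving S.1 T.1 ↔ ∃ q, Link S T q r := by
  rcases r with x | y
  · rw [leaving, Finset.inl_mem_disjSum, Finset.mem_toLeft, ← mem_left,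
      ← map_fst_forthPairs_append_last, List.mem_append, List.mem_map, List.mem_singleton]
    constructor
    · rintro (⟨⟨_, y⟩, h, rfl⟩ | hx)
      exacts [⟨_, .forth h⟩, ⟨_, .cross rfl hx⟩]
    · rintro ⟨q, ⟨-, hx⟩ | h⟩
      exacts [.inr hx, .inl ⟨_, ‹_›, rfl⟩]
  · rw [leaving, Finset.inr_mem_disjSum, Finset.mem_toRight, ← mem_right,
      ← map_fst_backPairs, List.mem_map]
    constructor
    · rintro ⟨⟨_, x⟩, h, rfl⟩
      exact ⟨_, .back h⟩
    · rintro ⟨q, h⟩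
      cases h with | back h => exact ⟨_, h, rfl⟩

theorem transfers_link (S T : Profile α β) : Transfers (link S T) S.1 T.1 where
  exists_leaving q hq := by
    obtain ⟨r, h⟩ := mem_entering_iff_exists_link.mp hq
    exact ⟨r, mem_leaving_iff_exists_link.mpr ⟨q, h⟩, mem_link.mpr h⟩
  exists_entering r hr := by
    obtain ⟨q, h⟩ := mem_leaving_iff_exists_link.mp hr
    exact ⟨q, mem_entering_iff_exists_link.mpr ⟨r, h⟩, mem_link.mpr h⟩

variable {S' T' : Profile α β}

theorem entering_subset_of_transfers_link (h : Transfers (link S T) S'.1 T'.1) :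
    entering S'.1 T'.1 ⊆ entering S.1 T.1 := fun q hq =>
  have ⟨r, _, hqr⟩ := h.exists_leaving q hq
  mem_entering_iff_exists_link.mpr ⟨r, mem_link.mp hqr⟩

theorem leaving_subset_of_transfers_link (h : Transfers (link S T) S'.1 T'.1) :
    leaving S'.1 T'.1 ⊆ leaving S.1 T.1 := fun r hr =>
  have ⟨q, _, hqr⟩ := h.exists_entering r hr
  mem_leaving_iff_exists_link.mpr ⟨q, mem_link.mp hqr⟩

theorem le_and_le_of_transfers_link (h : Transfers (link S T) S'.1 T'.1) : S ≤ S' ∧ T' ≤ T := by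
  have hentering := entering_subset_of_transfers_link h
  have hleaving := leaving_subset_of_transfers_link h
  constructor
  · refine le_of_subset_of_backPairs ?_ fun z hz => ?_
    · rintro (x | y) hq
      · simpa [entering] using @hentering (.inl x) (by simpa [entering] using hq)
      · simpa [leaving] using @hleaving (.inr y) (by simpa [leaving] using hq)
    · simpa [entering, leaving] using (h.mem_entering_iff (mem_link.mpr (.back hz))).symm
  · refine le_of_subset_of_forthPairs ?_ fun z hz => ?_
    · rintro (x | y) hq
      · simpa [leaving] using @hleaving (.inl x) (by simpa [leaving] using hq)
      · simpa [entering] using @hentering (.inr y) (by simpa [entering] using hq)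
    · simpa [entering, leaving] using (h.mem_entering_iff (mem_link.mpr (.forth hz))).symm

end Profile
namespace TwoDFA

open Profile

variable {α β : Type} [LinearOrder α] [LinearOrder β] {N : ℕ}

/-- The automaton whose `i`-th letter links the profiles `s i` and `s (i + 1)`. -/
noncomputable def profileAutomaton (s : Fin (N + 1) ≃o Profile α β) : TwoDFA (Fin N) (α ⊕ β) :=
  reversible (fun i => link (s i.castSucc) (s i.succ)) (s 0).last (s (Fin.last N)).first

variable (s : Fin (N + 1) ≃o Profile α β)

theorem orderIso_zero : s 0 = single (s 0).last :=
  le_antisymm (by simpa using s.monotone (Fin.zero_le (s.symm (single (s 0).last))))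
    (single_last_le _)

theorem orderIso_last : s (Fin.last N) = single (s (Fin.last N)).first :=
  le_antisymm (le_single_first _)
    (by simpa using s.monotone (Fin.le_last (s.symm (single (s (Fin.last N)).first))))

theorem accepts_profileAutomaton_finRange : (profileAutomaton s).Accepts (List.finRange N) := by
  refine accepts_reversible_of_transfers (S := fun j => (s (Fin.ofNat (N + 1) j)).1)
    (congrArg Subtype.val (orderIso_zero s)) ?_ fun j hj => ?_
  · rw [List.length_finRange, Fin.ofNat_eq_cast, Fin.natCast_eq_last]
    exact congrArg Subtype.val (orderIso_last s)
  · rw [List.length_finRange] at hj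
    have hcast : Fin.ofNat (N + 1) j = Fin.castSucc ⟨j, hj⟩ :=
      Fin.ext (Nat.mod_eq_of_lt (by lia))
    have hsucc : Fin.ofNat (N + 1) (j + 1) = Fin.succ ⟨j, hj⟩ :=
      Fin.ext (Nat.mod_eq_of_lt (by lia))
    simp only [List.getElem_finRange, hcast, hsucc]
    exact transfers_link _ _

theorem exists_profile_index_le {w : List (Fin N)} {S : ℕ → Finset (α ⊕ β)}
    (hfirst : S 0 = (s 0).1)
    (h : ∀ j (_ : j < w.length),
      Transfers (link (s w[j].castSucc) (s w[j].succ)) (S j) (S (j + 1)))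
    {j : ℕ} (hj : j ≤ w.length) : ∃ t : Fin (N + 1), (t : ℕ) ≤ j ∧ S j = (s t).1 := by
  induction j with
  | zero => exact ⟨0, le_rfl, hfirst⟩
  | succ j ih =>
    obtain ⟨t, htj, ht⟩ := ih (by lia)
    have hj' := h j hj
    rw [ht] at hj'
    obtain ⟨t', ht'⟩ := s.surjective ⟨S (j + 1), hj'.balanced (s t).2⟩
    have hS : S (j + 1) = (s t').1 := by rw [ht']
    rw [hS] at hj'
    obtain ⟨hwt, ht'w⟩ := le_and_le_of_transfers_link hj'
    rw [s.le_iff_le, Fin.le_def] at hwt ht'w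
    refine ⟨t', ?_, hS⟩
    calc (t' : ℕ) ≤ w[j] + 1 := ht'w
      _ ≤ t + 1 := Nat.succ_le_succ hwt
      _ ≤ j + 1 := Nat.succ_le_succ htj

theorem le_length_of_accepts_profileAutomaton [Finite α] [Finite β] {w : List (Fin N)}
    (h : (profileAutomaton s).Accepts w) : N ≤ w.length := by
  obtain ⟨S, hfirst, hlast, hS⟩ := accepts_reversible_iff_exists_transfers.mp h
  have hzero : S 0 = (s 0).1 := hfirst.trans (congrArg Subtype.val (orderIso_zero s)).symm
  obtain ⟨t, htw, ht⟩ := exists_profile_index_le s hzero hS le_rfl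
  have hst : s t = s (Fin.last N) :=
    (Subtype.ext (ht.symm.trans hlast)).trans (orderIso_last s).symm
  obtain rfl : t = Fin.last N := s.injective hst
  exact htw

end TwoDFA

theorem exists_direction_determinate_2dfa_shortest_eq_central_general (n k : ℕ) (hk : 1 ≤ k)
    (hkn : k ≤ n) :
    ∃ (α σ : Type) (_ : Fintype α) (_ : Fintype σ) (A : TwoDFA α σ),
      Fintype.card σ = n ∧ A.DirectionDeterminate ∧
      (∃ w, A.Accepts w ∧ w.length = n.choose k - 1) ∧
      (∀ w, A.Accepts w → n.choose k - 1 ≤ w.length) := by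
  have hcard : Fintype.card (Profile (Fin (n - k + 1)) (Fin (k - 1))) = n.choose k - 1 + 1 := by
    rw [Profile.card_eq_choose, Fintype.card_fin, Fintype.card_fin, Nat.sub_add_cancel hk,
      Nat.sub_add_cancel (Nat.choose_pos hkn)]
    congr 1
    lia
  let s := Fintype.orderIsoFinOfCardEq _ hcard
  refine ⟨Fin (n.choose k - 1), Fin (n - k + 1) ⊕ Fin (k - 1), inferInstance, inferInstance,
    TwoDFA.profileAutomaton s, ?_, TwoDFA.directionDeterminate_reversible _ _ _,
    ⟨List.finRange _, TwoDFA.accepts_profileAutomaton_finRange s, List.length_finRange⟩,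
    fun w => TwoDFA.le_length_of_accepts_profileAutomaton s⟩
  rw [Fintype.card_sum, Fintype.card_fin, Fintype.card_fin]
  lia

/-- For every `n ≥ 2` there exists a direction-determinate 2DFA with `n` states,
accepting at least one string, such that the length of the shortest string it accepts
is exactly `C(n, ⌊n/2⌋) − 1`. -/
theorem exists_direction_determinate_2dfa_shortest_eq_central (n : ℕ) (hn : 2 ≤ n) :
    ∃ (α σ : Type) (_ : Fintype α) (_ : Fintype σ) (A : TwoDFA α σ),
      Fintype.card σ = n ∧ A.DirectionDeterminate ∧
      (∃ w, A.Accepts w ∧ w.length = n.choose (n / 2) - 1) ∧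
      (∀ w, A.Accepts w → n.choose (n / 2) - 1 ≤ w.length) :=
  exists_direction_determinate_2dfa_shortest_eq_central_general n (n / 2) (by lia) (by lia)
end

section
/- For each n ≥ 2, there exist a finite alphabet Σₙ, a partial transition function δₙ : {1,…,n} × Σₙ ⇀ {1,…,n} × {−1,+1}, and a string wₙ ∈ Σₙ* of length 3·2^{n−2} − 1, such that: (1) for every position i of wₙ, the computation determined by δₙ that starts at position i of wₙ in state n eventually leaves the string wₙ by a transition from its rightmost symbol moving to the right in state 1; and (2) for every non-empty string u ∈ Σₙ*, if there exists a position of u such that the computation determined by δₙ starting at that position in state n eventually leaves u by a transition from its rightmost symbol moving to the right in state 1, then |u| ≥ |wₙ|. -/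
/-!
The strings are built by induction on the number of states, each new state doubling the length
and adding one. Suppose that `w` is a shortest string on which an automaton `δ` can get from `q`
past the right end in `s`. Put two copies of `w` around a separator. The new state sweeps towards
the separator, guided by an arrow on each letter, and there starts `δ` in `q` on the last letter of
the left copy; when `δ` returns to the separator in `s`, it is restarted in `q` on the first letter
of the right copy.

Conversely, on any string, a successful computation from the new state finds some separator and
moves in `q` to the block on its left. A block delimited by separators can be entered from the left
only in `q` and exited to the right only in `s`, so `δ` on its own, started in `q`, escapes from the
block just before that separator and from the block after the last separator of the string. These
two blocks are disjoint and each is at least as long as `w`.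
-/

/-- One step of the computation determined by a partial transition function
`δ : σ × α ⇀ σ × {−1,+1}` (the Boolean direction `true` meaning `+1` and `false`
meaning `−1`) on a string `u = b₁ … b_m` (with its positions `1, …, m` modelled
0-based as `0, …, m − 1`): from a configuration `c = (state, position)` with the
position inside `u`, the automaton reads the symbol at the current position,
changes state and moves one position in the indicated direction; at an undefined
transition, or off the string, the computation halts. -/
def StepOn {α σ : Type} (δ : σ → α → Option (σ × Bool)) (u : List α)
    (c c' : σ × ℤ) : Prop :=
  0 ≤ c.2 ∧ ∃ a, u[c.2.toNat]? = some a ∧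
    ∃ r d, δ c.1 a = some (r, d) ∧ c' = (r, c.2 + if d then 1 else -1)

/-- The computation determined by `δ`, started on the string `u` at (0-based) position
`i` in state `q`, eventually leaves `u` by a transition from its rightmost symbol moving
to the right in state `s`, i.e. it eventually reaches position `|u|` (just beyond the
rightmost symbol, which is the only way to get there) in state `s`. -/
def LeavesRightIn {α σ : Type} (δ : σ → α → Option (σ × Bool)) (u : List α)
    (q : σ) (i : ℕ) (s : σ) : Prop :=
  Relation.ReflTransGen (StepOn δ u) (q, (i : ℤ)) (s, (u.length : ℤ))

open Relation

section Computations

variable {α σ : Type} {δ : σ → α → Option (σ × Bool)} {u : List α}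

theorem StepOn.lt_length {c c' : σ × ℤ} (h : StepOn δ u c c') : c.2 < u.length := by
  obtain ⟨h_nonneg, a, ha, -⟩ := h
  have := (List.getElem?_eq_some_iff.1 ha).1
  omega

theorem stepOn_append_cons_iff {x y : List α} {a : α} {q : σ} {c : σ × ℤ} :
    StepOn δ (x ++ a :: y) (q, (x.length : ℤ)) c ↔
      ∃ r d, δ q a = some (r, d) ∧ c = (r, (x.length : ℤ) + if d then 1 else -1) := by
  simp [StepOn]

theorem nonneg_of_reflTransGen_stepOn {c : σ × ℤ} {s : σ}
    (h : ReflTransGen (StepOn δ u) c (s, (u.length : ℤ))) : 0 ≤ c.2 := by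
  rcases h.cases_head with rfl | ⟨_, hstep, -⟩
  · exact Int.natCast_nonneg _
  · exact hstep.1

theorem exists_leavesRightIn_of_reflTransGen {q s : σ} {i : ℤ}
    (h : ReflTransGen (StepOn δ u) (q, i) (s, (u.length : ℤ))) :
    ∃ k, LeavesRightIn δ u q k s := by
  lift i to ℕ using nonneg_of_reflTransGen_stepOn h
  exact ⟨i, h⟩

variable {α' σ' : Type} {δ' : σ' → α' → Option (σ' × Bool)} {f : α → α'} {g : σ → σ'}

theorem StepOn.map (hδ : ∀ q a r d, δ q a = some (r, d) → δ' (g q) (f a) = some (g r, d))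
    (x y : List α') {c c' : σ × ℤ} (h : StepOn δ u c c') :
    StepOn δ' (x ++ u.map f ++ y) (g c.1, x.length + c.2) (g c'.1, x.length + c'.2) := by
  obtain ⟨q, i⟩ := c
  obtain ⟨h_nonneg, a, ha, r, d, hd, rfl⟩ := h
  lift i to ℕ using h_nonneg
  simp only [Int.toNat_natCast] at ha
  obtain ⟨hi, -⟩ := List.getElem?_eq_some_iff.1 ha
  refine ⟨by positivity, f a, ?_, g r, d, hδ _ _ _ _ hd, by simp only [add_assoc]⟩
  rw [← Nat.cast_add, Int.toNat_natCast, List.append_assoc,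
    List.getElem?_append_right (by omega), List.getElem?_append_left (by simp; omega)]
  simp [ha]

theorem reflTransGen_stepOn_map
    (hδ : ∀ q a r d, δ q a = some (r, d) → δ' (g q) (f a) = some (g r, d))
    (x y : List α') {c c' : σ × ℤ} (h : ReflTransGen (StepOn δ u) c c') :
    ReflTransGen (StepOn δ' (x ++ u.map f ++ y))
      (g c.1, x.length + c.2) (g c'.1, x.length + c'.2) :=
  h.lift (fun c : σ × ℤ => (g c.1, x.length + c.2)) fun _ _ => StepOn.map hδ x y

theorem LeavesRightIn.map_states {δ' : σ' → α → Option (σ' × Bool)}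
    (hδ : ∀ q a r d, δ q a = some (r, d) → δ' (g q) a = some (g r, d))
    {q s : σ} {i : ℕ} (h : LeavesRightIn δ u q i s) : LeavesRightIn δ' u (g q) i (g s) := by
  simpa [LeavesRightIn] using reflTransGen_stepOn_map (f := id) hδ [] [] h

end Computations

/-- Call an escape a computation of `δ` that starts in state `q` and leaves the string to the right
in state `s`. Then there is an escape from every position of `w`, and no string shorter than `w` has
an escape. The position `i` in `length_le` may lie outside `u`, which makes a difference only for
`q = s`: there it forces `w` to be empty. -/
structure IsShortestEscape {α σ : Type} (δ : σ → α → Option (σ × Bool)) (q s : σ)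
    (w : List α) : Prop where
  leavesRightIn : ∀ i < w.length, LeavesRightIn δ w q i s
  length_le : ∀ u i, LeavesRightIn δ u q i s → w.length ≤ u.length

section RenameStates

variable {α σ τ : Type}

/-- The automaton `δ` with its states renamed along a bijection. -/
def renameStates (e : σ ≃ τ) (δ : σ → α → Option (σ × Bool)) (q : τ) (a : α) : Option (τ × Bool) :=
  (δ (e.symm q) a).map (Prod.map e id)

theorem leavesRightIn_renameStates_iff (e : σ ≃ τ) {δ : σ → α → Option (σ × Bool)} {u : List α}
    {q s : σ} {i : ℕ} :
    LeavesRightIn (renameStates e δ) u (e q) i (e s) ↔ LeavesRightIn δ u q i s := by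
  refine ⟨fun h => ?_, fun h => h.map_states fun q a r d hd => by simp [renameStates, hd]⟩
  have hback : ∀ q a r d, renameStates e δ q a = some (r, d) →
      δ (e.symm q) a = some (e.symm r, d) := by
    rintro q a r d hd
    obtain ⟨⟨r', d'⟩, hδ, hr⟩ := Option.map_eq_some_iff.1 hd
    cases hr
    simpa using hδ
  simpa using h.map_states hback

theorem IsShortestEscape.renameStates (e : σ ≃ τ) {δ : σ → α → Option (σ × Bool)} {q s : σ}
    {w : List α} (h : IsShortestEscape δ q s w) :
    IsShortestEscape (renameStates e δ) (e q) (e s) w where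
  leavesRightIn i hi := (leavesRightIn_renameStates_iff e).2 (h.leavesRightIn i hi)
  length_le u i hu := h.length_le u i ((leavesRightIn_renameStates_iff e).1 hu)

end RenameStates

theorem exists_eq_append_map_some {β : Type*} (u : List (Option β)) :
    ∃ x, ∃ v : List β, (∀ a ∈ x.getLast?, a = none) ∧ u = x ++ v.map some := by
  induction u using List.reverseRecOn with
  | nil => exact ⟨[], [], by simp, rfl⟩
  | append_singleton u a ih =>
    cases a with
    | none => exact ⟨u ++ [none], [], by simp, by simp⟩
    | some b =>
      obtain ⟨x, v, hx, rfl⟩ := ih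
      exact ⟨x, v ++ [b], hx, by simp⟩

section Doubling

variable {α σ : Type} [DecidableEq σ]

/-- The extension of `δ` by one state `none`. The letter `none` is the separator, and
`some (a, b)` is the letter `a` with an arrow `b` to be followed in the new state. At a separator,
`δ` is started in `q`, to the left of it when coming from the new state and to the right of it when
coming from `s`. -/
def doubled (δ : σ → α → Option (σ × Bool)) (q s : σ) :
    Option σ → Option (α × Bool) → Option (Option σ × Bool)
  | none, none => some (some q, false)
  | none, some (_, b) => some (none, b)
  | some p, none => if p = s then some (some q, true) else none
  | some p, some (a, _) => (δ p a).map (Prod.map some id)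

/-- Two copies of `w` around a separator, with all arrows pointing to the separator. -/
def doubledWord (w : List α) : List (Option (α × Bool)) :=
  w.map (fun a => some (a, true)) ++ none :: w.map (fun a => some (a, false))

theorem length_doubledWord (w : List α) : (doubledWord w).length = 2 * w.length + 1 := by
  simp only [doubledWord, List.length_append, List.length_cons, List.length_map]
  omega

variable {δ : σ → α → Option (σ × Bool)} {q s : σ}

theorem doubled_eq_some_of_eq_some (b : Bool) (p : σ) (a : α) (r : σ) (d : Bool)
    (h : δ p a = some (r, d)) : doubled δ q s (some p) (some (a, b)) = some (some r, d) := by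
  simp [doubled, h]

theorem stepOn_doubled_sweep_right {w : List α} {i : ℤ} (h0 : 0 ≤ i) (hi : i < w.length) :
    StepOn (doubled δ q s) (doubledWord w) (none, i) (none, i + 1) := by
  lift i to ℕ using h0
  have hi' : i < w.length := by omega
  refine ⟨Int.natCast_nonneg i, some (w[i], true), ?_, none, true, rfl, rfl⟩
  rw [Int.toNat_natCast, doubledWord, List.getElem?_append_left (by simpa)]
  simp [hi']

theorem stepOn_doubled_sweep_left {w : List α} {i : ℤ} (h0 : w.length < i)
    (hi : i ≤ 2 * w.length) :
    StepOn (doubled δ q s) (doubledWord w) (none, i) (none, i - 1) := by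
  obtain ⟨k, rfl⟩ : ∃ k : ℕ, i = (w.length + (k + 1) : ℕ) := ⟨(i - w.length - 1).toNat, by omega⟩
  have hk : k < w.length := by omega
  refine ⟨Int.natCast_nonneg _, some (w[k], false), ?_, none, false, rfl, rfl⟩
  rw [Int.toNat_natCast, doubledWord, List.getElem?_append_right (by simp)]
  simp [hk]

theorem reflTransGen_doubled_sweep (w : List α) {i : ℤ} (h0 : 0 ≤ i) (hi : i ≤ 2 * w.length) :
    ReflTransGen (StepOn (doubled δ q s) (doubledWord w)) (none, i) (none, w.length) := by
  let r (j k : ℤ) : Prop := StepOn (doubled δ q s) (doubledWord w) (none, j) (none, k)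
  have hsweep : ReflTransGen r i w.length := by
    rcases le_total i w.length with hiw | hiw
    · exact reflTransGen_of_succ_of_le r
        (fun j hj => stepOn_doubled_sweep_right (h0.trans hj.1) hj.2) hiw
    · refine reflTransGen_of_succ_of_ge r (fun j hj => ?_) hiw
      obtain ⟨hwj, hji⟩ := hj
      simpa [r] using stepOn_doubled_sweep_left (δ := δ) (q := q) (s := s) (w := w)
        (i := j + 1) (by omega) (by omega)
  exact hsweep.lift (fun j : ℤ => ((none : Option σ), j)) fun _ _ => id

theorem reflTransGen_doubled_of_separator {w : List α} (hw : w ≠ [])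
    (h : ∀ i < w.length, LeavesRightIn δ w q i s) :
    ReflTransGen (StepOn (doubled δ q s) (doubledWord w))
      (none, w.length) (some s, (doubledWord w).length) := by
  have hw_pos : 0 < w.length := List.length_pos_iff.2 hw
  have hstart : StepOn (doubled δ q s) (doubledWord w)
      (none, w.length) (some q, (w.length - 1 : ℕ)) := by
    refine ⟨Int.natCast_nonneg _, none, by simp [doubledWord], some q, false, rfl, ?_⟩
    rw [Nat.cast_pred hw_pos]
    rfl
  have hleft : ReflTransGen (StepOn (doubled δ q s) (doubledWord w))
      (some q, (w.length - 1 : ℕ)) (some s, w.length) := by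
    simpa [doubledWord] using reflTransGen_stepOn_map (doubled_eq_some_of_eq_some true) []
      (none :: w.map fun a => some (a, false)) (h (w.length - 1) (by omega))
  have hrestart : StepOn (doubled δ q s) (doubledWord w)
      (some s, w.length) (some q, w.length + 1) :=
    ⟨Int.natCast_nonneg _, none, by simp [doubledWord], some q, true, by simp [doubled], rfl⟩
  have hright : ReflTransGen (StepOn (doubled δ q s) (doubledWord w))
      (some q, w.length + 1) (some s, (doubledWord w).length) := by
    have hcopy := reflTransGen_stepOn_map (doubled_eq_some_of_eq_some (q := q) (s := s) false)
      (w.map (fun a => some (a, true)) ++ [none]) [] (h 0 hw_pos)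
    simpa [doubledWord, add_assoc, add_comm, add_left_comm] using hcopy
  exact .head hstart (hleft.trans (.head hrestart hright))

theorem leavesRightIn_doubled {w : List α} (hw : w ≠ [])
    (h : ∀ i < w.length, LeavesRightIn δ w q i s) (i : ℕ) (hi : i < (doubledWord w).length) :
    LeavesRightIn (doubled δ q s) (doubledWord w) none i (some s) := by
  rw [length_doubledWord] at hi
  exact (reflTransGen_doubled_sweep w (by omega) (by omega)).trans
    (reflTransGen_doubled_of_separator hw h)

theorem exists_reflTransGen_left_of_separator {u : List (Option (α × Bool))} {i : ℤ}
    (h : ReflTransGen (StepOn (doubled δ q s) u) (none, i) (some s, (u.length : ℤ))) :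
    ∃ x y, u = x ++ none :: y ∧
      ReflTransGen (StepOn (doubled δ q s) u) (some q, x.length - 1) (some s, u.length) := by
  generalize hc : ((none, i) : Option σ × ℤ) = c at h
  induction h using ReflTransGen.head_induction_on generalizing i with
  | refl => cases hc
  | head hstep hrest ih =>
    subst hc
    obtain ⟨h_nonneg, a, ha, r, d, hd, rfl⟩ := hstep
    rcases a with _ | ⟨a, b⟩
    · cases hd
      obtain ⟨hlt, hget⟩ := List.getElem?_eq_some_iff.1 ha
      refine ⟨u.take i.toNat, u.drop (i.toNat + 1), ?_, ?_⟩
      · rw [← hget, List.getElem_cons_drop, List.take_append_drop]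
      · simpa [hlt.le, h_nonneg, sub_eq_add_neg] using hrest
    · cases hd
      exact ih rfl

theorem StepOn.exists_eq_some_of_doubled {u : List (Option (α × Bool))} {p : σ} {i : ℤ}
    {c : Option σ × ℤ} (h : StepOn (doubled δ q s) u (some p, i) c) :
    ∃ r j, c = (some r, j) ∧ j ≤ i + 1 := by
  obtain ⟨-, a, -, r, d, hd, rfl⟩ := h
  have hr : ∃ r', r = some r' := by
    rcases a with _ | ⟨a, b⟩ <;> simp only [doubled] at hd
    · split_ifs at hd
      cases hd
      exact ⟨q, rfl⟩
    · obtain ⟨⟨r', d'⟩, -, hr'⟩ := Option.map_eq_some_iff.1 hd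
      cases hr'
      exact ⟨r', rfl⟩
  obtain ⟨r', rfl⟩ := hr
  exact ⟨r', _, rfl, by split_ifs <;> omega⟩

theorem StepOn.eq_of_doubled_separator {x y : List (Option (α × Bool))} {p : σ}
    {c : Option σ × ℤ} (h : StepOn (doubled δ q s) (x ++ none :: y) (some p, (x.length : ℤ)) c) :
    p = s ∧ c = (some q, (x.length : ℤ) + 1) := by
  obtain ⟨r, d, hd, rfl⟩ := stepOn_append_cons_iff.1 h
  simp only [doubled] at hd
  split_ifs at hd with hp
  cases hd
  exact ⟨hp, rfl⟩

theorem StepOn.eq_of_doubled_before_block {x y : List (Option (α × Bool))}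
    (hx : ∀ a ∈ x.getLast?, a = none) {p : σ} {c : Option σ × ℤ}
    (h : StepOn (doubled δ q s) (x ++ y) (some p, (x.length : ℤ) - 1) c) :
    c = (some q, (x.length : ℤ)) := by
  obtain ⟨x, rfl⟩ : ∃ x', x = x' ++ [none] := by
    rcases x.eq_nil_or_concat' with rfl | ⟨x', a, rfl⟩
    · have := h.1
      simp at this
    · exact ⟨x', by simpa using hx⟩
  simpa using (StepOn.eq_of_doubled_separator (x := x) (by simpa using h)).2

theorem StepOn.state_eq_of_doubled_after_block {x y : List (Option (α × Bool))}
    (hy : ∀ a ∈ y.head?, a = none) {p : σ} {c : Option σ × ℤ}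
    (h : StepOn (doubled δ q s) (x ++ y) (some p, (x.length : ℤ)) c) : p = s := by
  rcases y with _ | ⟨a, y⟩
  · have := h.lt_length
    simp at this
  · obtain rfl : a = none := by simpa using hy
    exact h.eq_of_doubled_separator.1

theorem StepOn.exists_stepOn_of_doubled_block {x y : List (Option (α × Bool))}
    {v : List (α × Bool)} {p : σ} {i : ℤ} {c : Option σ × ℤ} (h0 : 0 ≤ i) (hi : i < v.length)
    (h : StepOn (doubled δ q s) (x ++ v.map some ++ y) (some p, x.length + i) c) :
    ∃ r, ∃ j : ℤ, c = (some r, x.length + j) ∧ StepOn δ (v.map Prod.fst) (p, i) (r, j) := by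
  lift i to ℕ using h0
  have hi' : i < v.length := by omega
  obtain ⟨-, a, ha, r, d, hd, rfl⟩ := h
  have ha' : some v[i] = a := by
    rw [← Nat.cast_add, Int.toNat_natCast, List.append_assoc,
      List.getElem?_append_right (by omega), List.getElem?_append_left (by simp; omega)] at ha
    simpa [hi'] using ha
  subst ha'
  obtain ⟨⟨r', d'⟩, hδ, hr⟩ := Option.map_eq_some_iff.1 hd
  cases hr
  exact ⟨r', i + if d' then 1 else -1, by simp only [id, add_assoc],
    Int.natCast_nonneg i, v[i].1, by simp [hi'], r', d', hδ, rfl⟩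

/-- There is no lower bound on `i`: to the left of the block, the computation can only succeed by
entering the block from the left, and thus in state `q`. -/
theorem reflTransGen_or_exists_leavesRightIn_of_doubled_block {x y : List (Option (α × Bool))}
    {v : List (α × Bool)} (hx : ∀ a ∈ x.getLast?, a = none) (hy : ∀ a ∈ y.head?, a = none)
    {p : σ} {i : ℤ} (hi : i ≤ v.length)
    (h : ReflTransGen (StepOn (doubled δ q s) (x ++ v.map some ++ y))
      (some p, x.length + i) (some s, (x ++ v.map some ++ y).length)) :
    ReflTransGen (StepOn δ (v.map Prod.fst)) (p, i) (s, (v.map Prod.fst).length) ∨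
      ∃ k, LeavesRightIn δ (v.map Prod.fst) q k s := by
  generalize hc : ((some p, x.length + i) : Option σ × ℤ) = c at h
  induction h using ReflTransGen.head_induction_on generalizing p i with
  | refl =>
    simp only [Prod.mk.injEq, Option.some.injEq, List.length_append, List.length_map,
      Nat.cast_add] at hc
    obtain ⟨rfl, hpos⟩ := hc
    obtain rfl : i = v.length := by omega
    exact .inl (by simpa using .refl)
  | head hstep hrest ih =>
    subst hc
    rcases lt_trichotomy i (-1) with hi' | rfl | hi'
    · obtain ⟨r, j, rfl, hj⟩ := hstep.exists_eq_some_of_doubled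
      refine (ih (p := r) (i := j - x.length) (by omega) (by simp)).imp_left fun hout => ?_
      have h_nonneg : 0 ≤ j - x.length := nonneg_of_reflTransGen_stepOn hout
      omega
    · rw [List.append_assoc] at hstep
      obtain rfl := hstep.eq_of_doubled_before_block hx
      exact .inr ((ih (p := q) (i := 0) (Int.natCast_nonneg _) (by simp)).elim
        exists_leavesRightIn_of_reflTransGen id)
    · rcases hi.lt_or_eq with hiv | rfl
      · obtain ⟨r, j, rfl, hblock⟩ := hstep.exists_stepOn_of_doubled_block (by omega) hiv
        have hj : j ≤ v.length := by
          obtain ⟨-, -, -, r', d, -, hrj⟩ := hblock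
          cases hrj
          split_ifs <;> omega
        exact (ih hj rfl).imp_left (.head hblock)
      · obtain rfl : p = s :=
          StepOn.state_eq_of_doubled_after_block (x := x ++ v.map some) hy
            (by simpa using hstep)
        exact .inl (by simpa using .refl)

theorem exists_leavesRightIn_of_doubled_block {u x y : List (Option (α × Bool))}
    {v : List (α × Bool)} (hu : u = x ++ v.map some ++ y)
    (hx : ∀ a ∈ x.getLast?, a = none) (hy : ∀ a ∈ y.head?, a = none)
    {i : ℤ} (hi : i ≤ x.length + v.length)
    (h : ReflTransGen (StepOn (doubled δ q s) u) (some q, i) (some s, u.length)) :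
    ∃ k, LeavesRightIn δ (v.map Prod.fst) q k s := by
  subst hu
  exact (reflTransGen_or_exists_leavesRightIn_of_doubled_block hx hy
    (i := i - x.length) (by omega) (by rwa [add_sub_cancel])).elim
      exists_leavesRightIn_of_reflTransGen id

theorem two_mul_add_one_le_length_of_doubled {L : ℕ}
    (hL : ∀ u i, LeavesRightIn δ u q i s → L ≤ u.length)
    {u : List (Option (α × Bool))} {i : ℕ}
    (h : LeavesRightIn (doubled δ q s) u none i (some s)) : 2 * L + 1 ≤ u.length := by
  obtain ⟨x, y, rfl, hrun⟩ := exists_reflTransGen_left_of_separator h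
  obtain ⟨x', v, hx', rfl⟩ := exists_eq_append_map_some x
  obtain ⟨y', v', hy', rfl⟩ := exists_eq_append_map_some y
  obtain ⟨k, hk⟩ : ∃ k, LeavesRightIn δ (v.map Prod.fst) q k s :=
    exists_leavesRightIn_of_doubled_block rfl hx' (by simp) (by simp) hrun
  have hlast : ∀ a ∈ (x' ++ v.map some ++ none :: y').getLast?, a = none := by
    cases hy'_last : y'.getLast? <;> simp_all [List.getLast?_cons]
  obtain ⟨k', hk'⟩ : ∃ k', LeavesRightIn δ (v'.map Prod.fst) q k' s :=
    exists_leavesRightIn_of_doubled_block (y := []) (by simp) hlast (by simp)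
      (by simp; omega) hrun
  have hv := hL _ _ hk
  have hv' := hL _ _ hk'
  simp only [List.length_append, List.length_cons, List.length_map] at hv hv' ⊢
  omega

theorem IsShortestEscape.doubled {w : List α} (hw : w ≠ []) (h : IsShortestEscape δ q s w) :
    IsShortestEscape (doubled δ q s) none (some s) (doubledWord w) where
  leavesRightIn := leavesRightIn_doubled hw h.leavesRightIn
  length_le u i hu := by
    rw [length_doubledWord]
    exact two_mul_add_one_le_length_of_doubled h.length_le hu

end Doubling

/-- The two-state automaton from which the doubling starts. In state `1` it moves right over
`false` until, at a letter `true`, it steps back to the left into state `0`, in which it runs to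
the right end of the string. -/
def twoState : Fin 2 → Bool → Option (Fin 2 × Bool)
  | 0, _ => some (0, true)
  | 1, false => some (1, true)
  | 1, true => some (0, false)

theorem two_le_length_of_twoState {u : List Bool} {i : ℤ}
    (h : ReflTransGen (StepOn twoState u) (1, i) (0, (u.length : ℤ))) : 2 ≤ u.length := by
  generalize hc : ((1, i) : Fin 2 × ℤ) = c at h
  induction h using ReflTransGen.head_induction_on generalizing i with
  | refl => cases hc
  | head hstep hrest ih =>
    subst hc
    have hlt := hstep.lt_length
    have h_nonneg := nonneg_of_reflTransGen_stepOn hrest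
    obtain ⟨-, _ | _, -, r, d, hd, rfl⟩ := hstep <;> cases hd
    · exact ih rfl
    · simp only [Bool.false_eq_true, if_false] at h_nonneg
      simp only at hlt
      omega

theorem isShortestEscape_twoState : IsShortestEscape twoState 1 0 [false, true] where
  leavesRightIn := by
    have h1 : LeavesRightIn twoState [false, true] 1 1 0 :=
      .head (b := (0, 0)) ⟨by simp, true, rfl, 0, false, rfl, rfl⟩ <|
      .head (b := (0, 1)) ⟨by simp, false, rfl, 0, true, rfl, rfl⟩ <|
      .single ⟨by simp, true, rfl, 0, true, rfl, rfl⟩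
    have h0 : LeavesRightIn twoState [false, true] 1 0 0 :=
      .head ⟨by simp, false, rfl, 1, true, rfl, rfl⟩ h1
    intro i hi
    rcases i with _ | _ | i
    · exact h0
    · exact h1
    · simp at hi
  length_le _ _ h := two_le_length_of_twoState h

theorem exists_isShortestEscape (m : ℕ) :
    ∃ (α : Type) (_ : Fintype α) (δ : Fin (m + 2) → α → Option (Fin (m + 2) × Bool))
      (w : List α), w.length + 1 = 3 * 2 ^ m ∧ IsShortestEscape δ (Fin.last (m + 1)) 0 w := by
  induction m with
  | zero => exact ⟨Bool, inferInstance, twoState, [false, true], rfl, isShortestEscape_twoState⟩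
  | succ m ih =>
    obtain ⟨α, _, δ, w, hlen, hw⟩ := ih
    have hw_ne : w ≠ [] := by
      rintro rfl
      rw [List.length_nil] at hlen
      omega
    refine ⟨Option (α × Bool), inferInstance,
      renameStates finSuccEquivLast.symm (doubled δ (Fin.last _) 0), doubledWord w, ?_, ?_⟩
    · rw [length_doubledWord, pow_succ]
      omega
    · simpa using (hw.doubled hw_ne).renameStates finSuccEquivLast.symm

/-- For each `n ≥ 2` there exist a finite alphabet `Σₙ`, a partial transition function
`δₙ : {1, …, n} × Σₙ ⇀ {1, …, n} × {−1,+1}` (the states `1, …, n` being modelled by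
`Fin n`, with state `j` modelled as `j − 1`) and a string `wₙ ∈ Σₙ*` of length
`3 · 2^(n−2) − 1` such that: (1) started at any position of `wₙ` in state `n`, the
computation determined by `δₙ` eventually leaves `wₙ` by a transition from its rightmost
symbol moving to the right in state `1`; and (2) every non-empty string `u ∈ Σₙ*` for
which there is a position such that the computation determined by `δₙ`, started at that
position in state `n`, eventually leaves `u` by a transition from its rightmost symbol
moving to the right in state `1`, satisfies `|u| ≥ |wₙ|`. -/
theorem exists_hard_open_automaton (n : ℕ) (hn : 2 ≤ n) :
    ∃ (α : Type) (_ : Fintype α) (δ : Fin n → α → Option (Fin n × Bool)) (w : List α),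
      w.length = 3 * 2 ^ (n - 2) - 1 ∧
      (∀ i : ℕ, i < w.length →
        LeavesRightIn δ w (⟨n - 1, by omega⟩ : Fin n) i (⟨0, by omega⟩ : Fin n)) ∧
      (∀ u : List α, u ≠ [] →
        (∃ i : ℕ, i < u.length ∧
          LeavesRightIn δ u (⟨n - 1, by omega⟩ : Fin n) i (⟨0, by omega⟩ : Fin n)) →
        w.length ≤ u.length) := by
  obtain ⟨m, rfl⟩ := Nat.exists_eq_add_of_le' hn
  obtain ⟨α, hα, δ, w, hlen, hw⟩ := exists_isShortestEscape m
  refine ⟨α, hα, δ, w, ?_, hw.leavesRightIn, ?_⟩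
  · rw [Nat.add_sub_cancel]
    omega
  · rintro u - ⟨i, -, hu⟩
    exact hw.length_le u i hu
end
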